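/- Let s ∈ ℂ with −1 < Re s < 1 and s ≠ 0, and let x > 0 be real. Define, for t > 0, Φ(t,s) := 2 ∑_{n=1}^∞ σ_{−s}(n) n^{s/2} K_s(4π√(nt)) − Γ(1+s)ζ(1+s)·t^{−1−s/2}/(2π)^{2+s} − Γ(1−s)ζ(1−s)·t^{−1+s/2}/(2π)^{2−s}, η(t,s) := 2i ∑_{n=1}^∞ σ_{−s}(n) n^{s/2} ( e^{πis/4} K_s(4π e^{iπ/4} √(nt)) − e^{−πis/4} K_s(4π e^{−iπ/4} √(nt)) ), and κ(t,s) := η(t,s) − (1/(2π²t))·( Γ(1+s)ζ(1+s)·(2π√t)^{−s} + Γ(1−s)ζ(1−s)·cos(πs/2)·(2π√t)^{s} ). Then Φ(x,s) = (x^{−s/2}/π) ∫_0^∞ t^{1+s/2}·κ(t,s)/(t² + x²) dt. -/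

import Mathlib

open Complex Finset MeasureTheory
open scoped Real BigOperators Classical

/-- Generalized divisor sum `σ_s(n) = ∑_{d ∣ n} d^s` with complex exponent. -/
noncomputable def csigma (s : ℂ) (n : ℕ) : ℂ := ∑ d ∈ n.divisors, (d : ℂ) ^ s

/-- The modified Bessel function of the second kind,
`K_ν(z) = ∫_0^∞ e^{-z cosh t} cosh(ν t) dt` (for `Re z > 0`). -/
noncomputable def Kbes (ν z : ℂ) : ℂ :=
  ∫ t in Set.Ioi (0 : ℝ), Complex.exp (-z * (Real.cosh t : ℂ)) * Complex.cosh (ν * (t : ℂ))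

/-- `Φ(t,s)`. -/
noncomputable def PhiK (t : ℝ) (s : ℂ) : ℂ :=
  2 * (∑' n : ℕ, csigma (-s) (n + 1) * ((n : ℂ) + 1) ^ (s / 2) *
      Kbes s ((4 * π * Real.sqrt (((n : ℝ) + 1) * t) : ℝ) : ℂ))
    - Complex.Gamma (1 + s) * riemannZeta (1 + s) * (t : ℂ) ^ (-1 - s / 2) /
        ((2 * π : ℝ) : ℂ) ^ (2 + s)
    - Complex.Gamma (1 - s) * riemannZeta (1 - s) * (t : ℂ) ^ (-1 + s / 2) /
        ((2 * π : ℝ) : ℂ) ^ (2 - s)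

/-- `η(t,s)`. -/
noncomputable def etaK (t : ℝ) (s : ℂ) : ℂ :=
  2 * Complex.I * ∑' n : ℕ, csigma (-s) (n + 1) * ((n : ℂ) + 1) ^ (s / 2) *
    (Complex.exp ((π : ℂ) * Complex.I * s / 4) *
        Kbes s (4 * (π : ℂ) * Complex.exp ((π : ℂ) * Complex.I / 4) *
          (Real.sqrt (((n : ℝ) + 1) * t) : ℂ))
      - Complex.exp (-(π : ℂ) * Complex.I * s / 4) *
        Kbes s (4 * (π : ℂ) * Complex.exp (-(π : ℂ) * Complex.I / 4) *
          (Real.sqrt (((n : ℝ) + 1) * t) : ℂ)))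

/-- `κ(t,s)`. -/
noncomputable def kappaK (t : ℝ) (s : ℂ) : ℂ :=
  etaK t s - (1 / (2 * (π : ℂ) ^ 2 * (t : ℂ))) *
    (Complex.Gamma (1 + s) * riemannZeta (1 + s) *
        ((2 * π * Real.sqrt t : ℝ) : ℂ) ^ (-s)
      + Complex.Gamma (1 - s) * riemannZeta (1 - s) * Complex.cos ((π : ℂ) * s / 2) *
        ((2 * π * Real.sqrt t : ℝ) : ℂ) ^ s)



/-- The Planck kernel. -/
noncomputable def pkE (u : ℂ) : ℂ := (Complex.exp (2 * π * u) - 1)⁻¹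

/-- The Planck kernel with its pole at zero removed. -/
noncomputable def pkg (u : ℂ) : ℂ := pkE u - (2 * π * u)⁻¹

lemma pk_exp_sub_one_norm (u : ℂ) (hu : 0 < u.re) :
    Real.exp (2 * π * u.re) - 1 ≤ ‖Complex.exp (2 * π * u) - 1‖ := by
  have h := norm_sub_norm_le (Complex.exp (2 * π * u)) 1
  rw [Complex.norm_exp] at h
  simpa using h

lemma pk_exp_sub_one_ne (u : ℂ) (hu : 0 < u.re) : Complex.exp (2 * π * u) - 1 ≠ 0 := by
  have h := pk_exp_sub_one_norm u hu
  have : 0 < 2 * π * u.re := by positivity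
  have h2 := Real.add_one_lt_exp this.ne'
  intro h0
  rw [h0, norm_zero] at h
  linarith

lemma pkE_bound (u : ℂ) (hu : 0 < u.re) (k : ℕ) (hk : 0 < k) :
    ‖pkE u‖ ≤ (k.factorial : ℝ) / (2 * π * u.re) ^ k := by
  have hp : 0 < 2 * π * u.re := by positivity
  have h := pk_exp_sub_one_norm u hu
  have h1 : (2 * π * u.re) ^ k / (k.factorial : ℝ) ≤ Real.exp (2 * π * u.re) - 1 := by
    have := Real.sum_le_exp_of_nonneg hp.le (k + 1)
    rw [Finset.sum_range_succ] at this
    have h2 : (1 : ℝ) ≤ ∑ i ∈ Finset.range k, (2 * π * u.re) ^ i / (i.factorial : ℝ) := by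
      have := Finset.single_le_sum (f := fun i : ℕ => (2 * π * u.re) ^ i / (i.factorial : ℝ))
        (fun i _ => by positivity) (Finset.mem_range.2 hk)
      simpa using this
    linarith
  rw [pkE, norm_inv, ← inv_div]
  exact inv_anti₀ (by positivity) (h1.trans h)

lemma pkE_differentiableAt (u : ℂ) (hu : 0 < u.re) : DifferentiableAt ℂ pkE u := by
  unfold pkE
  exact DifferentiableAt.inv (by fun_prop) (pk_exp_sub_one_ne u hu)

lemma pk_ne_zero_of_re {u : ℂ} (hu : 0 < u.re) : u ≠ 0 := by
  rintro rfl; simp at hu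

lemma pkg_differentiableAt (u : ℂ) (hu : 0 < u.re) : DifferentiableAt ℂ pkg u := by
  unfold pkg
  refine (pkE_differentiableAt u hu).sub (DifferentiableAt.inv (by fun_prop) ?_)
  have := pk_ne_zero_of_re hu
  simp [this, Real.pi_ne_zero]

lemma pkg_bound_inv (u : ℂ) (hu : 0 < u.re) (h2 : ‖u‖ ≤ 2 * u.re) : ‖pkg u‖ ≤ 2 / ‖u‖ := by
  have hn : 0 < ‖u‖ := norm_pos_iff.2 (pk_ne_zero_of_re hu)
  have h1 := pkE_bound u hu 1 one_pos
  have hpi := Real.pi_gt_three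
  have h3 : ‖(2 * π * u : ℂ)⁻¹‖ ≤ 1 / ‖u‖ := by
    rw [norm_inv, norm_mul, norm_mul, inv_eq_one_div]
    simp only [Complex.norm_ofNat, Complex.norm_real, Real.norm_eq_abs, abs_of_pos Real.pi_pos]
    gcongr
    nlinarith
  have h4 : ‖pkE u‖ ≤ 1 / ‖u‖ := by
    refine h1.trans ?_
    simp only [Nat.factorial_one, Nat.cast_one, pow_one]
    gcongr
    nlinarith
  calc ‖pkg u‖ ≤ ‖pkE u‖ + ‖(2 * π * u : ℂ)⁻¹‖ := norm_sub_le _ _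
    _ ≤ 1 / ‖u‖ + 1 / ‖u‖ := by gcongr
    _ = 2 / ‖u‖ := by ring

lemma pkg_bound_one (u : ℂ) (hu : 0 < u.re) (h2 : ‖u‖ ≤ 2 * u.re) : ‖pkg u‖ ≤ 100 := by
  have hn : 0 < ‖u‖ := norm_pos_iff.2 (pk_ne_zero_of_re hu)
  have hpi := Real.pi_gt_three
  have hpi4 := Real.pi_lt_four
  rcases le_total (1 / 50) ‖u‖ with h | h
  · refine (pkg_bound_inv u hu h2).trans ?_
    rw [div_le_iff₀ hn]; linarith
  · set w : ℂ := 2 * π * u with hw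
    have hwn : ‖w‖ = 2 * π * ‖u‖ := by
      rw [hw, norm_mul, norm_mul]
      simp [abs_of_pos Real.pi_pos]
    have hw0 : 0 < ‖w‖ := by rw [hwn]; positivity
    have hw1 : ‖w‖ ≤ 1 / 2 := by rw [hwn]; nlinarith
    have h5 := Complex.norm_exp_sub_one_sub_id_le (x := w) (by linarith)
    have h6 : ‖w‖ / 2 ≤ ‖Complex.exp w - 1‖ := by
      have := norm_sub_norm_le w (-(Complex.exp w - 1 - w))
      rw [norm_neg] at this
      have e : w - -(Complex.exp w - 1 - w) = Complex.exp w - 1 := by ring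
      rw [e] at this
      nlinarith
    have hwne : w ≠ 0 := norm_pos_iff.1 hw0
    have hene : Complex.exp w - 1 ≠ 0 := norm_pos_iff.1 (by linarith)
    have e : pkg u = -(Complex.exp w - 1 - w) / ((Complex.exp w - 1) * w) := by
      rw [pkg, pkE, ← hw]; field_simp; ring
    rw [e, norm_div, norm_neg, norm_mul, div_le_iff₀ (by positivity)]
    calc _ ≤ ‖w‖ ^ 2 := h5
      _ ≤ 100 * (‖w‖ / 2 * ‖w‖) := by nlinarith
      _ ≤ _ := by gcongr

/-- change of variables `t = exp b`. -/
lemma pk_integral_exp (f : ℝ → ℂ) :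
    ∫ t in Set.Ioi (0 : ℝ), f t = ∫ b : ℝ, (Real.exp b : ℂ) * f (Real.exp b) := by
  have himg : Real.exp '' Set.univ = Set.Ioi 0 := by rw [Set.image_univ, Real.range_exp]
  rw [← himg, integral_image_eq_integral_abs_deriv_smul MeasurableSet.univ
    (fun x _ => (Real.hasDerivAt_exp x).hasDerivWithinAt) Real.exp_injective.injOn]
  simp

lemma pk_cpow_exp (b : ℝ) (s : ℂ) : ((Real.exp b : ℝ) : ℂ) ^ s = Complex.exp (s * b) := by
  rw [cpow_def_of_ne_zero (by simp), ← Complex.ofReal_log (Real.exp_pos b).le, Real.log_exp, mul_comm]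

lemma pk_mellin_exp (f : ℝ → ℂ) (s : ℂ) :
    mellin f s = ∫ b : ℝ, Complex.exp (s * b) * f (Real.exp b) := by
  rw [mellin, pk_integral_exp]
  congr 1; ext b
  rw [pk_cpow_exp, smul_eq_mul, ← mul_assoc, ofReal_exp, ← Complex.exp_add]
  congr 2; ring

/-- two sided exponential bound gives integrability -/
lemma pk_integrable_of_bounds {f : ℝ → ℂ} (hf : Continuous f) {C a c : ℝ} (ha : 0 < a) (hc : 0 < c)
    (h1 : ∀ b, ‖f b‖ ≤ C * Real.exp (a * b)) (h2 : ∀ b, ‖f b‖ ≤ C * Real.exp (-c * b)) :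
    Integrable f := by
  rw [← integrableOn_univ, ← Set.Iic_union_Ioi (a := (0 : ℝ))]
  refine IntegrableOn.union ?_ ?_
  · refine Integrable.mono' (g := fun b => C * Real.exp (a * b)) ?_ hf.aestronglyMeasurable
      (Filter.Eventually.of_forall h1)
    exact (integrableOn_exp_mul_Iic ha 0).const_mul C
  · refine Integrable.mono' (g := fun b => C * Real.exp (-c * b)) ?_ hf.aestronglyMeasurable
      (Filter.Eventually.of_forall h2)
    exact (integrableOn_exp_mul_Ioi (by linarith) 0).const_mul C


lemma pk_strip (f : ℂ → ℂ) (α β : ℝ)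
    (hd : ∀ ξ : ℂ, ξ.im ∈ Set.uIcc α β → DifferentiableAt ℂ f ξ)
    (B : ℝ → ℝ) (hB : Filter.Tendsto B Filter.atTop (nhds 0))
    (R₀ : ℝ) (hb : ∀ ξ : ℂ, ξ.im ∈ Set.uIcc α β → R₀ ≤ |ξ.re| → ‖f ξ‖ ≤ B |ξ.re|)
    (hα : Integrable (fun x : ℝ => f (x + α * I))) (hβ : Integrable (fun x : ℝ => f (x + β * I))) :
    ∫ x : ℝ, f (x + α * I) = ∫ x : ℝ, f (x + β * I) := by
  have hneg : Filter.Tendsto (fun T : ℝ => -T) Filter.atTop Filter.atBot :=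
    Filter.tendsto_neg_atTop_atBot
  have t1 := intervalIntegral_tendsto_integral hα hneg Filter.tendsto_id
  have t2 := intervalIntegral_tendsto_integral hβ hneg Filter.tendsto_id
  have key : Filter.Tendsto (fun T : ℝ => (∫ x in (-T)..(id T), f (x + α * I)) -
      ∫ x in (-T)..(id T), f (x + β * I)) Filter.atTop (nhds 0) := by
    have hz : Filter.Tendsto (fun T : ℝ => 2 * (B T * |β - α|)) Filter.atTop (nhds 0) := by
      have := (hB.mul_const |β - α|).const_mul 2
      simpa using this
    refine squeeze_zero_norm' ?_ hz
    filter_upwards [Filter.eventually_ge_atTop R₀, Filter.eventually_ge_atTop 0] with T hT hT0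
    have h := integral_boundary_rect_eq_zero_of_differentiableOn f (-T + α * I) (T + β * I) (by
      intro ξ hξ
      refine (hd ξ ?_).differentiableWithinAt
      simpa [mem_reProdIm] using hξ.2)
    simp at h
    have hv : ∀ r : ℝ, |r| = T → ‖∫ y in α..β, f (r + y * I)‖ ≤ B T * |β - α| := by
      intro r hr
      refine intervalIntegral.norm_integral_le_of_norm_le_const ?_
      intro y hy
      have := hb (r + y * I) (by simpa using Set.uIoc_subset_uIcc hy) (by simpa [hr] using hT)
      simpa [hr] using this
    have v1 := hv T (abs_of_nonneg hT0)
    have v2 := hv (-T) (by rw [abs_neg, abs_of_nonneg hT0])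
    have e : (∫ x in (-T)..(id T), f (x + α * I)) - (∫ x in (-T)..(id T), f (x + β * I)) =
        I * (∫ y in α..β, f ((-T : ℝ) + y * I)) - I * (∫ y in α..β, f (T + y * I)) := by
      simp only [id]
      push_cast
      linear_combination h
    rw [e]
    calc _ ≤ ‖I * (∫ y in α..β, f ((-T : ℝ) + y * I))‖ + ‖I * (∫ y in α..β, f (T + y * I))‖ :=
          norm_sub_le _ _
      _ ≤ B T * |β - α| + B T * |β - α| := by
          rw [norm_mul, norm_mul, norm_I, one_mul, one_mul]; gcongr
      _ = _ := by ring
  exact sub_eq_zero.1 (tendsto_nhds_unique (t1.sub t2) key)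


lemma pk_sector (ξ : ℂ) (h : |ξ.im| ≤ π / 4) :
    0 < (Complex.exp ξ).re ∧ ‖Complex.exp ξ‖ ≤ 2 * (Complex.exp ξ).re := by
  have hc : 1 / 2 ≤ Real.cos ξ.im := by
    have h1 := Real.one_sub_sq_div_two_le_cos (x := ξ.im)
    have h2 : |ξ.im| ≤ 1 := h.trans (by linarith [Real.pi_le_four])
    have h3 : ξ.im ^ 2 ≤ 1 := by rw [← sq_abs]; nlinarith [abs_nonneg ξ.im]
    linarith
  rw [Complex.exp_re, Complex.norm_exp]
  have := Real.exp_pos ξ.re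
  constructor
  · positivity
  · nlinarith

lemma pk_re_exp_nonneg (ξ : ℂ) (h : |ξ.im| ≤ π / 2) : 0 ≤ (Complex.exp ξ).re := by
  rw [Complex.exp_re]
  have := Real.cos_nonneg_of_mem_Icc (abs_le.1 h)
  have := Real.exp_pos ξ.re
  positivity

/-- inner integral -/
noncomputable def pkQ (z : ℂ) (y : ℝ) : ℂ :=
  ∫ b : ℝ, (Real.exp b : ℂ) ^ 2 * pkg (z * Real.exp b) / ((Real.exp b : ℂ) ^ 2 + z ^ 2 * (y : ℂ) ^ 2)

lemma pk_norm_sum_ge (ξ : ℂ) (h : |ξ.im| ≤ π / 2) (r : ℝ) (hr : 0 ≤ r) :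
    r ≤ ‖Complex.exp ξ + r‖ ∧ ‖Complex.exp ξ‖ ≤ ‖Complex.exp ξ + r‖ := by
  have h1 := pk_re_exp_nonneg ξ h
  constructor
  · refine le_trans ?_ (Complex.re_le_norm _)
    simpa using h1
  · rw [Complex.norm_def, Complex.norm_def]
    apply Real.sqrt_le_sqrt
    rw [normSq_apply, normSq_apply]
    simp
    nlinarith

lemma pk_arctan_int (y : ℝ) (hy : 0 < y) :
    Integrable (fun b : ℝ => 2 * y ^ 2 * Real.exp b ^ 2 / (Real.exp b ^ 4 + y ^ 4)) ∧
    ∫ b : ℝ, 2 * y ^ 2 * Real.exp b ^ 2 / (Real.exp b ^ 4 + y ^ 4) = π / 2 := by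
  have hpos : ∀ b : ℝ, 0 < Real.exp b ^ 4 + y ^ 4 := fun b => by positivity
  have hcont : Continuous (fun b : ℝ => 2 * y ^ 2 * Real.exp b ^ 2 / (Real.exp b ^ 4 + y ^ 4)) := by
    refine Continuous.div (by fun_prop) (by fun_prop) (fun b => (hpos b).ne')
  have hInt0 : Integrable (fun b : ℝ => 2 * y ^ 2 * Real.exp b ^ 2 / (Real.exp b ^ 4 + y ^ 4)) := by
    have : Integrable (fun b : ℝ => ((2 * y ^ 2 * Real.exp b ^ 2 / (Real.exp b ^ 4 + y ^ 4) : ℝ) : ℂ)) := by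
      refine pk_integrable_of_bounds (C := 2 * y ^ 2 + 2 / y ^ 2) (a := 2) (c := 2) (by fun_prop) two_pos two_pos ?_ ?_
      · intro b
        rw [Complex.norm_real, Real.norm_of_nonneg (by positivity)]
        have e : Real.exp (2 * b) = Real.exp b ^ 2 := by rw [← Real.exp_nat_mul]; norm_num
        rw [e, add_mul]
        have : 2 * y ^ 2 * Real.exp b ^ 2 / (Real.exp b ^ 4 + y ^ 4) ≤ 2 / y ^ 2 * Real.exp b ^ 2 := by
          rw [div_le_iff₀ (hpos b), div_mul_eq_mul_div, div_mul_eq_mul_div, le_div_iff₀ (by positivity)]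
          have : 0 ≤ Real.exp b ^ 6 := by positivity
          nlinarith
        have : 0 ≤ 2 * y ^ 2 * Real.exp b ^ 2 := by positivity
        linarith
      · intro b
        rw [Complex.norm_real, Real.norm_of_nonneg (by positivity)]
        have e : Real.exp (-2 * b) = (Real.exp b ^ 2)⁻¹ := by
          rw [← Real.exp_nat_mul, ← Real.exp_neg]; congr 1; push_cast; ring
        rw [e, add_mul]
        have : 2 * y ^ 2 * Real.exp b ^ 2 / (Real.exp b ^ 4 + y ^ 4) ≤ 2 * y ^ 2 * (Real.exp b ^ 2)⁻¹ := by
          rw [← div_eq_mul_inv, div_le_div_iff₀ (hpos b) (by positivity)]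
          have : 0 ≤ y ^ 6 := by positivity
          nlinarith
        have : 0 ≤ 2 / y ^ 2 * (Real.exp b ^ 2)⁻¹ := by positivity
        linarith
    simpa only [RCLike.re_eq_complex_re, Complex.ofReal_re] using this.re
  refine ⟨hInt0, ?_⟩
  have hd : ∀ b : ℝ, HasDerivAt (fun b : ℝ => Real.arctan (Real.exp b ^ 2 / y ^ 2))
      (2 * y ^ 2 * Real.exp b ^ 2 / (Real.exp b ^ 4 + y ^ 4)) b := by
    intro b
    have : HasDerivAt (fun b : ℝ => Real.arctan (Real.exp b ^ 2 / y ^ 2))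
        (1 / (1 + (Real.exp b ^ 2 / y ^ 2) ^ 2) * ((2 : ℕ) * Real.exp b ^ (2 - 1) * Real.exp b / y ^ 2)) b :=
      ((((Real.hasDerivAt_exp b).pow 2).div_const (y ^ 2)).arctan)
    convert this using 1
    simp only [Nat.cast_ofNat]
    field_simp
    ring
  have h1 : Filter.Tendsto (fun b : ℝ => Real.arctan (Real.exp b ^ 2 / y ^ 2)) Filter.atTop (nhds (π / 2)) := by
    have : Filter.Tendsto (fun b : ℝ => Real.exp b ^ 2 / y ^ 2) Filter.atTop Filter.atTop :=
      ((Filter.tendsto_pow_atTop two_ne_zero).comp Real.tendsto_exp_atTop).atTop_div_const (by positivity)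
    exact ((Real.tendsto_arctan_atTop.mono_right nhdsWithin_le_nhds).comp this)
  have h2 : Filter.Tendsto (fun b : ℝ => Real.arctan (Real.exp b ^ 2 / y ^ 2)) Filter.atBot (nhds 0) := by
    have : Filter.Tendsto (fun b : ℝ => Real.arctan (Real.exp b ^ 2 / y ^ 2)) Filter.atBot (nhds (Real.arctan (0 ^ 2 / y ^ 2))) :=
      (Real.continuous_arctan.tendsto _).comp (((Real.tendsto_exp_atBot.pow 2).div_const _))
    simpa using this
  rw [integral_of_hasDerivAt_of_tendsto hd hInt0 h2 h1, sub_zero]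

lemma pk_denom (ξ : ℂ) (θ y : ℝ) (h : |ξ.im - θ| ≤ π / 4) :
    y ^ 2 ≤ ‖Complex.exp ξ ^ 2 + Complex.exp (θ * I) ^ 2 * (y : ℂ) ^ 2‖ ∧
    ‖Complex.exp ξ‖ ^ 2 ≤ ‖Complex.exp ξ ^ 2 + Complex.exp (θ * I) ^ 2 * (y : ℂ) ^ 2‖ := by
  have e : Complex.exp ξ ^ 2 + Complex.exp (θ * I) ^ 2 * (y : ℂ) ^ 2 =
      Complex.exp (θ * I) ^ 2 * (Complex.exp (2 * (ξ - θ * I)) + ((y ^ 2 : ℝ) : ℂ)) := by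
    have : Complex.exp (2 * (ξ - θ * I)) = Complex.exp ξ ^ 2 / Complex.exp (θ * I) ^ 2 := by
      rw [← Complex.exp_nat_mul, ← Complex.exp_nat_mul, ← Complex.exp_sub]
      congr 1; push_cast; ring
    rw [this]
    have := Complex.exp_ne_zero (θ * I)
    field_simp
    push_cast
    ring
  have h2 := pk_norm_sum_ge (2 * (ξ - θ * I)) (by
    simp only [mul_im, sub_im, re_ofNat, im_ofNat, ofReal_re, I_im, mul_one, ofReal_im, I_re]
    simp only [mul_zero, zero_mul, add_zero]
    rw [abs_mul, abs_two]; linarith) (y ^ 2) (by positivity)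
  rw [e, norm_mul, norm_pow, Complex.norm_exp_ofReal_mul_I, one_pow, one_mul]
  refine ⟨h2.1, ?_⟩
  refine le_trans (le_of_eq ?_) h2.2
  rw [Complex.norm_exp, Complex.norm_exp, ← Real.exp_nat_mul]
  simp

lemma pk_sector_real (θ b : ℝ) (h : |θ| ≤ π / 4) :
    0 < (Complex.exp (θ * I) * (Real.exp b : ℂ)).re ∧
    ‖Complex.exp (θ * I) * (Real.exp b : ℂ)‖ ≤ 2 * (Complex.exp (θ * I) * (Real.exp b : ℂ)).re ∧
    ‖Complex.exp (θ * I) * (Real.exp b : ℂ)‖ = Real.exp b := by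
  have e : Complex.exp (θ * I) * (Real.exp b : ℂ) = Complex.exp (b + θ * I) := by
    rw [ofReal_exp, ← Complex.exp_add, add_comm]
  have := pk_sector (b + θ * I) (by simpa using h)
  rw [e]
  refine ⟨this.1, this.2, ?_⟩
  rw [Complex.norm_exp]; simp

lemma pk_g_bounds (θ b : ℝ) (h : |θ| ≤ π / 4) :
    ‖pkg (Complex.exp (θ * I) * (Real.exp b : ℂ))‖ ≤ 100 ∧
    ‖pkg (Complex.exp (θ * I) * (Real.exp b : ℂ))‖ ≤ 100 * Real.exp (-b) := by
  obtain ⟨h1, h2, h3⟩ := pk_sector_real θ b h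
  refine ⟨pkg_bound_one _ h1 h2, (pkg_bound_inv _ h1 h2).trans ?_⟩
  rw [h3, Real.exp_neg, div_eq_mul_inv]
  gcongr
  norm_num

lemma pk_g_cont (θ : ℝ) (h : |θ| ≤ π / 4) :
    Continuous (fun b : ℝ => pkg (Complex.exp (θ * I) * (Real.exp b : ℂ))) := by
  rw [continuous_iff_continuousAt]
  intro b
  have := (pkg_differentiableAt _ (pk_sector_real θ b h).1).continuousAt
  exact ContinuousAt.comp (f := fun b : ℝ => Complex.exp (θ * I) * (Real.exp b : ℂ)) this (by fun_prop)

lemma pkQ_integrable (θ y : ℝ) (hθ : |θ| ≤ π / 4) (hy : 0 < y) :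
    Integrable (fun b : ℝ => (Real.exp b : ℂ) ^ 2 * pkg (Complex.exp (θ * I) * Real.exp b) /
      ((Real.exp b : ℂ) ^ 2 + Complex.exp (θ * I) ^ 2 * (y : ℂ) ^ 2)) := by
  have hden : ∀ b : ℝ, y ^ 2 ≤ ‖(Real.exp b : ℂ) ^ 2 + Complex.exp (θ * I) ^ 2 * (y : ℂ) ^ 2‖ ∧
      Real.exp b ^ 2 ≤ ‖(Real.exp b : ℂ) ^ 2 + Complex.exp (θ * I) ^ 2 * (y : ℂ) ^ 2‖ := by
    intro b
    have := pk_denom b θ y (by simpa using hθ)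
    rw [Complex.norm_exp, ofReal_re, ← ofReal_exp] at this
    exact this
  have hpos : ∀ b : ℝ, 0 < ‖(Real.exp b : ℂ) ^ 2 + Complex.exp (θ * I) ^ 2 * (y : ℂ) ^ 2‖ :=
    fun b => lt_of_lt_of_le (by positivity) (hden b).1
  have hn : ∀ b : ℝ, ‖((Real.exp b : ℝ) : ℂ)‖ = Real.exp b := fun b => by
    rw [Complex.norm_real, Real.norm_of_nonneg (Real.exp_pos b).le]
  refine pk_integrable_of_bounds (C := 100 / y ^ 2 + 100) (a := 2) (c := 1) ?_ two_pos one_pos ?_ ?_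
  · refine Continuous.div ?_ (by fun_prop) (fun b => norm_pos_iff.1 (hpos b))
    exact Continuous.mul (by fun_prop) (pk_g_cont θ hθ)
  · intro b
    rw [norm_div, norm_mul, norm_pow, hn]
    have e : Real.exp (2 * b) = Real.exp b ^ 2 := by rw [← Real.exp_nat_mul]; norm_num
    rw [e]
    calc _ ≤ Real.exp b ^ 2 * 100 / y ^ 2 := by
          gcongr
          · exact (pk_g_bounds θ b hθ).1
          · exact (hden b).1
      _ = 100 / y ^ 2 * Real.exp b ^ 2 := by ring
      _ ≤ _ := by gcongr; linarith
  · intro b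
    rw [norm_div, norm_mul, norm_pow, hn]
    calc _ ≤ Real.exp b ^ 2 * (100 * Real.exp (-b)) / Real.exp b ^ 2 := by
          gcongr
          · exact (pk_g_bounds θ b hθ).2
          · exact (hden b).2
      _ = 100 * Real.exp (-1 * b) := by
          rw [neg_one_mul]
          have := Real.exp_pos b
          field_simp
      _ ≤ _ := by gcongr; have : 0 ≤ 100 / y ^ 2 := by positivity
                  linarith


/-- auxiliary regularised function -/
noncomputable def pkh (y : ℝ) (u : ℂ) : ℂ := pkg u - pkg y * (2 * (y : ℂ) ^ 2 / (u ^ 2 + (y : ℂ) ^ 2))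

noncomputable def pkF (y : ℝ) (u : ℂ) : ℂ := dslope (pkh y) (y : ℂ) u * u ^ 2 / (u + y)

lemma pkh_self (y : ℝ) (hy : 0 < y) : pkh y y = 0 := by
  have : (y : ℂ) ≠ 0 := by exact_mod_cast hy.ne'
  unfold pkh
  field_simp
  ring

lemma pkF_of_ne (y : ℝ) (hy : 0 < y) (u : ℂ) (hu : u ≠ y) :
    pkF y u = pkh y u * u ^ 2 / (u ^ 2 - (y : ℂ) ^ 2) := by
  unfold pkF
  rw [dslope_of_ne _ hu, slope_def_field, pkh_self y hy, sub_zero]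
  rw [div_mul_eq_mul_div, div_div]
  congr 1
  ring

lemma pk_line (y : ℝ) (hy : 0 < y) (ε : ℝ) (hε : ε = 1 ∨ ε = -1) (b : ℝ) :
    pkF y (Complex.exp (b + (ε * (π / 4) : ℝ) * I)) =
    (Real.exp b : ℂ) ^ 2 * pkg (Complex.exp ((ε * (π / 4) : ℝ) * I) * Real.exp b) /
      ((Real.exp b : ℂ) ^ 2 + Complex.exp ((ε * (π / 4) : ℝ) * I) ^ 2 * (y : ℂ) ^ 2) +
    ε * I * pkg y * ((2 * y ^ 2 * Real.exp b ^ 2 / (Real.exp b ^ 4 + y ^ 4) : ℝ) : ℂ) := by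
  set z : ℂ := Complex.exp ((ε * (π / 4) : ℝ) * I) with hz
  have hz2 : z ^ 2 = ε * I := by
    rw [hz, ← Complex.exp_nat_mul]
    rcases hε with rfl | rfl
    · have : ((2 : ℕ) : ℂ) * (((1 * (π / 4) : ℝ) : ℂ) * I) = π / 2 * I := by push_cast; ring
      rw [this, Complex.exp_pi_div_two_mul_I]; simp
    · have : ((2 : ℕ) : ℂ) * (((-1 * (π / 4) : ℝ) : ℂ) * I) = -(π / 2 * I) := by push_cast; ring
      rw [this, Complex.exp_neg, Complex.exp_pi_div_two_mul_I]; simp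
  have hε2 : (ε : ℂ) ^ 2 = 1 := by rcases hε with rfl | rfl <;> simp
  set J : ℂ := ε * I with hJ
  have hJ2 : J ^ 2 = -1 := by rw [hJ, mul_pow, hε2, I_sq]; ring
  have hJ0 : J ≠ 0 := by intro h; rw [h] at hJ2; norm_num at hJ2
  set e : ℂ := ((Real.exp b : ℝ) : ℂ) with he
  have hu : Complex.exp (b + (ε * (π / 4) : ℝ) * I) = z * e := by
    rw [he, ofReal_exp, hz, ← Complex.exp_add, add_comm]
  have h4 : e ^ 4 + (y : ℂ) ^ 4 ≠ 0 := by
    have : (Real.exp b ^ 4 + y ^ 4 : ℝ) ≠ 0 := by positivity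
    rw [he]; exact_mod_cast this
  have hf : (e ^ 2 + J * y ^ 2) * (e ^ 2 - J * y ^ 2) = e ^ 4 + (y : ℂ) ^ 4 := by
    linear_combination (-(y : ℂ) ^ 4) * hJ2
  have hD : e ^ 2 + J * (y : ℂ) ^ 2 ≠ 0 := fun h => h4 (by rw [← hf, h, zero_mul])
  have hD' : e ^ 2 - J * (y : ℂ) ^ 2 ≠ 0 := fun h => h4 (by rw [← hf, h, mul_zero])
  have hu2 : (z * e) ^ 2 = J * e ^ 2 := by rw [mul_pow, hz2]
  have hm : (z * e) ^ 2 - (y : ℂ) ^ 2 = J * (e ^ 2 + J * (y : ℂ) ^ 2) := by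
    rw [hu2]; linear_combination (-(y : ℂ) ^ 2) * hJ2
  have hp : (z * e) ^ 2 + (y : ℂ) ^ 2 = J * (e ^ 2 - J * (y : ℂ) ^ 2) := by
    rw [hu2]; linear_combination ((y : ℂ) ^ 2) * hJ2
  have hne : z * e ≠ y := by
    intro h
    rw [h, sub_self] at hm
    exact mul_ne_zero hJ0 hD hm.symm
  rw [hu, pkF_of_ne y hy _ hne, hm, pkh, hp, hu2, hz2]
  push_cast
  rw [← ofReal_exp, ← he, ← hf]
  clear_value J e z
  field_simp
  linear_combination (-(2 * e ^ 2 * pkg y * (y : ℂ) ^ 2 * (e ^ 2 - J * (y : ℂ) ^ 2)⁻¹ *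
    (e ^ 2 + J * (y : ℂ) ^ 2)⁻¹)) * hJ2

lemma pk_dispersion (y : ℝ) (hy : 0 < y) :
    pkQ (Complex.exp ((1 * (π / 4) : ℝ) * I)) y - pkQ (Complex.exp ((-1 * (π / 4) : ℝ) * I)) y
      = -I * π * pkg y := by
  have hpi := Real.pi_pos
  obtain ⟨ai, av⟩ := pk_arctan_int y hy
  have ai' := ai.ofReal (𝕜 := ℂ)
  have hQ : ∀ ε : ℝ, (ε = 1 ∨ ε = -1) → |ε * (π / 4)| ≤ π / 4 := by
    rintro ε (rfl | rfl)
    · rw [one_mul, abs_of_pos (by positivity)]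
    · rw [neg_one_mul, abs_neg, abs_of_pos (by positivity)]
  have hI : ∀ ε : ℝ, (ε = 1 ∨ ε = -1) →
      Integrable (fun b : ℝ => pkF y (Complex.exp (b + (ε * (π / 4) : ℝ) * I))) ∧
      ∫ b : ℝ, pkF y (Complex.exp (b + (ε * (π / 4) : ℝ) * I)) =
        pkQ (Complex.exp ((ε * (π / 4) : ℝ) * I)) y + ε * I * pkg y * (π / 2) := by
    intro ε hε
    have i1 := pkQ_integrable (ε * (π / 4)) y (hQ ε hε) hy
    have i2 := ai'.const_mul (ε * I * pkg y)
    simp_rw [pk_line y hy ε hε]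
    refine ⟨i1.add i2, ?_⟩
    refine (integral_add i1 i2).trans ?_
    rw [integral_const_mul]
    refine congrArg₂ (· + ·) rfl (congrArg₂ (· * ·) rfl ?_)
    have := integral_ofReal (𝕜 := ℂ) (f := fun b : ℝ => 2 * y ^ 2 * Real.exp b ^ 2 / (Real.exp b ^ 4 + y ^ 4)) (μ := volume)
    refine this.trans ?_
    rw [av]; push_cast; rfl
  obtain ⟨p1, p2⟩ := hI 1 (Or.inl rfl)
  obtain ⟨m1, m2⟩ := hI (-1) (Or.inr rfl)
  have hsec : ∀ ξ : ℂ, ξ.im ∈ Set.uIcc (-1 * (π / 4)) (1 * (π / 4)) → |ξ.im| ≤ π / 4 := by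
    intro ξ hξ
    rw [Set.uIcc_of_le (by linarith)] at hξ
    rw [abs_le]; constructor <;> [linarith [hξ.1]; linarith [hξ.2]]
  have hsq : ∀ u : ℂ, 0 < u.re → u ^ 2 + (y : ℂ) ^ 2 ≠ 0 := by
    intro u hu h
    have h1 := congrArg Complex.re h
    have h2 := congrArg Complex.im h
    simp [pow_two] at h1 h2
    have : u.im = 0 := by nlinarith
    rw [this] at h1
    nlinarith
  have key := pk_strip (fun ξ => pkF y (Complex.exp ξ)) (-1 * (π / 4)) (1 * (π / 4)) ?_
    (fun R => (300 * 2 / y ^ 2 + 400 + 400 * y ^ 2) * Real.exp (-R)) ?_ (max 0 (Real.log 2 + |Real.log y|)) ?_ m1 p1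
  · have k2 := m2.symm.trans (key.trans p2)
    push_cast at k2 ⊢
    linear_combination -k2
  · intro ξ hξ
    obtain ⟨h1, h2⟩ := pk_sector ξ (hsec ξ hξ)
    have hopen : IsOpen {u : ℂ | 0 < u.re} := isOpen_lt continuous_const continuous_re
    have hds : DifferentiableOn ℂ (dslope (pkh y) y) {u : ℂ | 0 < u.re} := by
      rw [differentiableOn_dslope (hopen.mem_nhds (by simpa using hy))]
      intro u hu
      refine DifferentiableAt.differentiableWithinAt ?_
      unfold pkh
      refine (pkg_differentiableAt u hu).sub (DifferentiableAt.const_mul ?_ _)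
      exact DifferentiableAt.div (by fun_prop) (by fun_prop) (hsq u hu)
    have hF : DifferentiableAt ℂ (pkF y) (Complex.exp ξ) := by
      unfold pkF
      refine DifferentiableAt.div (DifferentiableAt.mul (hds.differentiableAt (hopen.mem_nhds h1)) (by fun_prop)) (by fun_prop) ?_
      apply pk_ne_zero_of_re
      simp only [add_re, ofReal_re]; linarith
    exact DifferentiableAt.comp (f := Complex.exp) ξ hF (by fun_prop)
  · have := (Real.tendsto_exp_neg_atTop_nhds_zero).const_mul (300 * 2 / y ^ 2 + 400 + 400 * y ^ 2)
    simpa using this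
  · intro ξ hξ hR
    obtain ⟨h1, h2⟩ := pk_sector ξ (hsec ξ hξ)
    set u := Complex.exp ξ with hu
    have hn : ‖u‖ = Real.exp ξ.re := Complex.norm_exp ξ
    have hn0 : 0 < ‖u‖ := by rw [hn]; exact Real.exp_pos _
    have hs := pk_norm_sum_ge (2 * ξ) (by
      have := hsec ξ hξ
      simp; linarith) (y ^ 2) (by positivity)
    have hu2 : Complex.exp (2 * ξ) = u ^ 2 := by rw [hu, ← Complex.exp_nat_mul]; norm_num
    rw [hu2, norm_pow] at hs
    push_cast at hs
    have hy2 := (pkg_bound_one (y : ℂ) (by simpa using hy) (by simp [abs_of_pos hy]; linarith))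
    have hRl : Real.log 2 + |Real.log y| ≤ |ξ.re| := (le_max_right _ _).trans hR
    have hly := abs_le.1 (le_refl |Real.log y|)
    have hlog2 := Real.log_pos one_lt_two
    have hbase : ‖pkh y u‖ ≤ ‖pkg u‖ + 100 * (2 * y ^ 2 / ‖u ^ 2 + (y : ℂ) ^ 2‖) := by
      refine (norm_sub_le _ _).trans ?_
      gcongr
      rw [norm_mul, norm_div]
      have : ‖2 * (y : ℂ) ^ 2‖ = 2 * y ^ 2 := by simp
      rw [this]
      gcongr
    have hmin : |‖u‖ ^ 2 - y ^ 2| ≤ ‖u ^ 2 - (y : ℂ) ^ 2‖ := by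
      have := abs_norm_sub_norm_le (u ^ 2) ((y : ℂ) ^ 2)
      simpa using this
    have hse := hs.1
    rcases le_total 0 ξ.re with h0 | h0
    · rw [abs_of_nonneg h0] at hRl ⊢
      have hge : 2 * y ≤ ‖u‖ := by
        rw [hn, ← Real.exp_log (show 0 < 2 * y by positivity), Real.log_mul two_ne_zero hy.ne']
        apply Real.exp_le_exp.2; linarith
      have hbig : ‖u‖ ^ 2 / 2 ≤ ‖u ^ 2 - (y : ℂ) ^ 2‖ := by
        refine le_trans ?_ (le_trans (le_abs_self _) hmin); nlinarith
      have hne : u ≠ y := by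
        intro h; rw [h] at hge; simp [abs_of_pos hy] at hge; linarith
      have e1 : Real.exp (-ξ.re) = ‖u‖⁻¹ := by rw [hn, Real.exp_neg]
      rw [pkF_of_ne y hy u hne, norm_div, norm_mul, norm_pow, e1]
      have hgu := pkg_bound_inv u h1 h2
      have hq : 2 * y ^ 2 / ‖u ^ 2 + (y : ℂ) ^ 2‖ ≤ 2 * y ^ 2 / ‖u‖ ^ 2 := by gcongr; exact hs.2
      have hq2 : 2 * y ^ 2 / ‖u‖ ^ 2 ≤ y / ‖u‖ := by
        rw [div_le_div_iff₀ (by positivity) (by positivity)]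
        nlinarith [mul_pos hy hn0]
      have hh : ‖pkh y u‖ ≤ (2 + 100 * y) / ‖u‖ := by
        calc _ ≤ _ := hbase
          _ ≤ 2 / ‖u‖ + 100 * (y / ‖u‖) := add_le_add hgu (mul_le_mul_of_nonneg_left (hq.trans hq2) (by norm_num))
          _ = _ := by ring
      calc _ ≤ (2 + 100 * y) / ‖u‖ * ‖u‖ ^ 2 / (‖u‖ ^ 2 / 2) := by gcongr
        _ = (4 + 200 * y) * ‖u‖⁻¹ := by field_simp; ring
        _ ≤ _ := by
          refine mul_le_mul_of_nonneg_right ?_ (by positivity)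
          have : 0 ≤ 300 * 2 / y ^ 2 := by positivity
          nlinarith [sq_nonneg (y - 1)]
    · rw [abs_of_nonpos h0] at hRl ⊢
      have hge : ‖u‖ ≤ y / 2 := by
        rw [hn, ← Real.exp_log (show 0 < y / 2 by positivity), Real.log_div hy.ne' two_ne_zero]
        apply Real.exp_le_exp.2; linarith
      have hbig : y ^ 2 / 2 ≤ ‖u ^ 2 - (y : ℂ) ^ 2‖ := by
        refine le_trans ?_ (le_trans (neg_le_abs _) hmin); nlinarith
      have hne : u ≠ y := by
        intro h; rw [h] at hge; simp [abs_of_pos hy] at hge; linarith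
      have e1 : Real.exp (- -ξ.re) = ‖u‖ := by rw [hn, neg_neg]
      rw [pkF_of_ne y hy u hne, norm_div, norm_mul, norm_pow, e1]
      have hgu := pkg_bound_one u h1 h2
      have hq : 2 * y ^ 2 / ‖u ^ 2 + (y : ℂ) ^ 2‖ ≤ 2 * y ^ 2 / y ^ 2 := by gcongr
      have hq2 : 2 * y ^ 2 / y ^ 2 = 2 := by field_simp
      have hh : ‖pkh y u‖ ≤ 300 := by
        calc _ ≤ _ := hbase
          _ ≤ 100 + 100 * 2 := by rw [hq2] at hq; gcongr
          _ = _ := by norm_num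
      calc _ ≤ 300 * ‖u‖ ^ 2 / (y ^ 2 / 2) := by gcongr
        _ = (600 * ‖u‖ / y ^ 2) * ‖u‖ := by field_simp; ring
        _ ≤ _ := by
          gcongr
          have : 600 * ‖u‖ / y ^ 2 ≤ 300 / y := by
            rw [div_le_div_iff₀ (by positivity) (by positivity)]; nlinarith
          have h3 : 300 / y ≤ 300 * 2 / y ^ 2 + 400 := by
            have : 300 * 2 / y ^ 2 + 400 - 300 / y = (300 * 2 - 300 * y + 400 * y ^ 2) / y ^ 2 := by
              field_simp; ring
            have : 0 ≤ (300 * 2 - 300 * y + 400 * y ^ 2) / y ^ 2 := by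
              apply div_nonneg _ (by positivity); nlinarith [sq_nonneg (y - 1)]
            linarith
          have : 0 ≤ 400 * y ^ 2 := by positivity
          linarith


lemma pk_min_interp (c β : ℝ) (h0 : 0 ≤ β) (h1 : β ≤ 1) {N A : ℝ} (hA : 0 ≤ A)
    (hn1 : N ≤ A) (hn2 : N ≤ A * Real.exp (-c)) : N ≤ A * Real.exp (-(β * c)) := by
  rcases le_total 0 c with h | h
  · refine hn2.trans ?_
    gcongr
    nlinarith
  · refine hn1.trans ?_
    have : 1 ≤ Real.exp (-(β * c)) := Real.one_le_exp (by nlinarith)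
    nlinarith

lemma pk_g_interp (θ b β : ℝ) (h : |θ| ≤ π / 4) (h0 : 0 ≤ β) (h1 : β ≤ 1) :
    ‖pkg (Complex.exp (θ * I) * (Real.exp b : ℂ))‖ ≤ 100 * Real.exp (-(β * b)) :=
  pk_min_interp b β h0 h1 (by norm_num) (pk_g_bounds θ b h).1 (pk_g_bounds θ b h).2

lemma pk_norm_exp_mul (w : ℂ) (b : ℝ) : ‖Complex.exp (w * b)‖ = Real.exp (w.re * b) := by
  rw [Complex.norm_exp]; simp

lemma pk_g_weighted (θ : ℝ) (h : |θ| ≤ π / 4) (w : ℂ) (h0 : 0 < w.re) (h1 : w.re < 1) :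
    Integrable (fun b : ℝ => Complex.exp (w * b) * pkg (Complex.exp (θ * I) * (Real.exp b : ℂ))) := by
  refine pk_integrable_of_bounds (C := 100) (a := w.re) (c := 1 - w.re) ?_ h0 (by linarith) ?_ ?_
  · exact Continuous.mul (by fun_prop) (pk_g_cont θ h)
  · intro b
    rw [norm_mul, pk_norm_exp_mul, mul_comm]
    gcongr
    exact (pk_g_bounds θ b h).1
  · intro b
    rw [norm_mul, pk_norm_exp_mul]
    calc _ ≤ Real.exp (w.re * b) * (100 * Real.exp (-b)) := by
          gcongr; exact (pk_g_bounds θ b h).2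
      _ = _ := by rw [mul_left_comm, ← Real.exp_add]; congr 2; ring

lemma pk_weight_x (x : ℝ) (hx : 0 < x) (r : ℝ) (h0 : 0 < r) (h1 : r < 2) :
    Integrable (fun a : ℝ => Real.exp (r * a) / (Real.exp a ^ 2 + x ^ 2)) := by
  have hpos : ∀ b : ℝ, 0 < Real.exp b ^ 2 + x ^ 2 := fun b => by positivity
  have hcont : Continuous (fun b : ℝ => Real.exp (r * b) / (Real.exp b ^ 2 + x ^ 2)) := by
    refine Continuous.div (by fun_prop) (by fun_prop) (fun b => (hpos b).ne')
  have : Integrable (fun b : ℝ => ((Real.exp (r * b) / (Real.exp b ^ 2 + x ^ 2) : ℝ) : ℂ)) := by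
    refine pk_integrable_of_bounds (C := 1 + 1 / x ^ 2) (a := r) (c := 2 - r) (by fun_prop) h0 (by linarith) ?_ ?_
    · intro b
      rw [Complex.norm_real, Real.norm_of_nonneg (by positivity)]
      calc _ ≤ Real.exp (r * b) / x ^ 2 := by gcongr; nlinarith [sq_nonneg (Real.exp b)]
        _ = 1 / x ^ 2 * Real.exp (r * b) := by ring
        _ ≤ _ := by gcongr; linarith
    · intro b
      rw [Complex.norm_real, Real.norm_of_nonneg (by positivity)]
      calc _ ≤ Real.exp (r * b) / Real.exp b ^ 2 := by gcongr; nlinarith [sq_nonneg x]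
        _ = 1 * Real.exp (-(2 - r) * b) := by
          rw [← Real.exp_nat_mul, ← Real.exp_sub, one_mul]; congr 1; push_cast; ring
        _ ≤ _ := by
          gcongr
          have : 0 ≤ 1 / x ^ 2 := by positivity
          linarith
  simpa only [RCLike.re_eq_complex_re, Complex.ofReal_re] using this.re

/-- rotation step for fixed `b`. -/
lemma pk_rotate (s : ℂ) (hs1 : -1 < s.re) (hs2 : s.re < 1) (x : ℝ) (hx : 0 < x) (θ : ℝ)
    (hθ : |θ| ≤ π / 4) (b : ℝ) :
    Complex.exp (θ * I * s) * ∫ a : ℝ, Complex.exp ((2 + s) * a) *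
        pkg (Complex.exp (θ * I) * Real.exp (a - b)) / ((Real.exp a : ℂ) ^ 2 + (x : ℂ) ^ 2) =
    ∫ a : ℝ, Complex.exp ((2 + s) * a) * pkg (Real.exp (a - b)) /
        ((Real.exp a : ℂ) ^ 2 + Complex.exp (θ * I) ^ 2 * (x : ℂ) ^ 2) := by
  set f : ℂ → ℂ := fun ξ => Complex.exp ((2 + s) * ξ) * pkg (Complex.exp (ξ - b)) /
    (Complex.exp ξ ^ 2 + Complex.exp (θ * I) ^ 2 * (x : ℂ) ^ 2) with hf
  have hstrip : ∀ y : ℝ, y ∈ Set.uIcc 0 θ → |y| ≤ π / 4 ∧ |y - θ| ≤ π / 4 := by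
    intro y hy
    rw [abs_le] at hθ
    rw [abs_le, abs_le]
    rcases le_total 0 θ with h | h
    · rw [Set.uIcc_of_le h] at hy
      refine ⟨⟨?_, ?_⟩, ?_, ?_⟩ <;> linarith [hy.1, hy.2]
    · rw [Set.uIcc_of_ge h] at hy
      refine ⟨⟨?_, ?_⟩, ?_, ?_⟩ <;> linarith [hy.1, hy.2]
  have hden : ∀ ξ : ℂ, ξ.im ∈ Set.uIcc 0 θ →
      0 < ‖Complex.exp ξ ^ 2 + Complex.exp (θ * I) ^ 2 * (x : ℂ) ^ 2‖ := fun ξ hξ =>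
    lt_of_lt_of_le (by positivity) (pk_denom ξ θ x (hstrip _ hξ).2).1
  have hdiff : ∀ ξ : ℂ, ξ.im ∈ Set.uIcc 0 θ → DifferentiableAt ℂ f ξ := by
    intro ξ hξ
    have hg := pkg_differentiableAt (Complex.exp (ξ - b)) (pk_sector (ξ - b) (by simpa using (hstrip _ hξ).1)).1
    have hg2 : DifferentiableAt ℂ (fun ξ : ℂ => pkg (Complex.exp (ξ - b))) ξ :=
      DifferentiableAt.comp (f := fun ξ : ℂ => Complex.exp (ξ - b)) ξ hg (by fun_prop)
    exact DifferentiableAt.div (DifferentiableAt.mul (by fun_prop) hg2) (by fun_prop) (norm_pos_iff.1 (hden ξ hξ))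
  set C : ℝ := Real.exp |s.im| * 100 / x ^ 2 + Real.exp |s.im| * 100 * Real.exp b with hC
  have hC0 : 0 ≤ C := by positivity
  have hnum : ∀ ξ : ℂ, ξ.im ∈ Set.uIcc 0 θ →
      ‖Complex.exp ((2 + s) * ξ)‖ ≤ Real.exp |s.im| * Real.exp ((2 + s.re) * ξ.re) := by
    intro ξ hξ
    rw [Complex.norm_exp, ← Real.exp_add]
    apply Real.exp_le_exp.2
    simp
    have h1 := (hstrip _ hξ).1
    have h2 : |ξ.im| ≤ 1 := h1.trans (by linarith [Real.pi_le_four])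
    have h3 : -(s.im * ξ.im) ≤ |s.im| := by
      refine (neg_le_abs _).trans ?_
      rw [abs_mul]
      exact mul_le_of_le_one_right (abs_nonneg _) h2
    linarith
  have hb1 : ∀ ξ : ℂ, ξ.im ∈ Set.uIcc 0 θ → ‖f ξ‖ ≤ C * Real.exp ((2 + s.re) * ξ.re) := by
    intro ξ hξ
    have hsec := pk_sector (ξ - b) (by simpa using (hstrip _ hξ).1)
    have hd := pk_denom ξ θ x (hstrip _ hξ).2
    rw [hf]; simp only
    rw [norm_div, norm_mul]
    calc _ ≤ Real.exp |s.im| * Real.exp ((2 + s.re) * ξ.re) * 100 / x ^ 2 := by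
          gcongr
          · exact hnum ξ hξ
          · exact pkg_bound_one _ hsec.1 hsec.2
          · exact hd.1
      _ = Real.exp |s.im| * 100 / x ^ 2 * Real.exp ((2 + s.re) * ξ.re) := by ring
      _ ≤ _ := by
        gcongr; rw [hC]
        have : 0 ≤ Real.exp |s.im| * 100 * Real.exp b := by positivity
        linarith
  have hb2 : ∀ ξ : ℂ, ξ.im ∈ Set.uIcc 0 θ → ‖f ξ‖ ≤ C * Real.exp (-(1 - s.re) * ξ.re) := by
    intro ξ hξ
    have hsec := pk_sector (ξ - b) (by simpa using (hstrip _ hξ).1)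
    have hd := pk_denom ξ θ x (hstrip _ hξ).2
    rw [Complex.norm_exp] at hd
    have hg := pkg_bound_inv _ hsec.1 hsec.2
    rw [Complex.norm_exp] at hg
    rw [hf]; simp only
    rw [norm_div, norm_mul]
    calc _ ≤ Real.exp |s.im| * Real.exp ((2 + s.re) * ξ.re) * (2 / Real.exp (ξ - b).re) / Real.exp ξ.re ^ 2 := by
          gcongr
          · exact hnum ξ hξ
          · exact hd.2
      _ = Real.exp |s.im| * 2 * Real.exp b * Real.exp (-(1 - s.re) * ξ.re) := by
          have e1 : Real.exp (ξ - b).re = Real.exp ξ.re / Real.exp b := by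
            rw [← Real.exp_sub]; simp
          have e2 : Real.exp ((2 + s.re) * ξ.re) = Real.exp (-(1 - s.re) * ξ.re) * Real.exp ξ.re ^ 3 := by
            rw [← Real.exp_nat_mul, ← Real.exp_add]; congr 1; push_cast; ring
          rw [e1, e2]
          field_simp
      _ ≤ _ := by
        refine mul_le_mul_of_nonneg_right ?_ (Real.exp_pos _).le
        rw [hC]
        have : 0 ≤ Real.exp |s.im| * 100 / x ^ 2 := by positivity
        have : 0 ≤ Real.exp |s.im| * Real.exp b := by positivity
        linarith
  have hInt0 : ∀ y : ℝ, y ∈ Set.uIcc 0 θ → Integrable (fun a : ℝ => f (a + y * I)) := by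
    intro y hy
    have him : ∀ a : ℝ, ((a : ℂ) + y * I).im ∈ Set.uIcc 0 θ := fun a => by simpa using hy
    refine pk_integrable_of_bounds (C := C) (a := 2 + s.re) (c := 1 - s.re) ?_ (by linarith) (by linarith) ?_ ?_
    · rw [continuous_iff_continuousAt]
      intro a
      exact ContinuousAt.comp (f := fun a : ℝ => (a : ℂ) + y * I) (hdiff _ (him a)).continuousAt (by fun_prop)
    · intro a; simpa using hb1 _ (him a)
    · intro a; simpa using hb2 _ (him a)
  have hB : Filter.Tendsto (fun R : ℝ => C * Real.exp (-(min (2 + s.re) (1 - s.re)) * R)) Filter.atTop (nhds 0) := by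
    have hm : 0 < min (2 + s.re) (1 - s.re) := lt_min (by linarith) (by linarith)
    have h1 : Filter.Tendsto (fun R : ℝ => min (2 + s.re) (1 - s.re) * R) Filter.atTop Filter.atTop :=
      Filter.tendsto_id.const_mul_atTop hm
    have := (Real.tendsto_exp_neg_atTop_nhds_zero.comp h1).const_mul C
    simpa [Function.comp_def] using this
  have key := pk_strip f 0 θ hdiff _ hB 0 ?_ (hInt0 0 Set.left_mem_uIcc) (hInt0 θ Set.right_mem_uIcc)
  · rw [← integral_const_mul]
    refine Eq.trans (Eq.trans ?_ key.symm) ?_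
    · congr 1; ext a
      rw [hf]; simp only
      have e1 : Complex.exp ((2 + s) * (a + θ * I)) = Complex.exp (θ * I * s) * Complex.exp (θ * I) ^ 2 * Complex.exp ((2 + s) * a) := by
        rw [← Complex.exp_nat_mul, ← Complex.exp_add, ← Complex.exp_add]; congr 1; push_cast; ring
      have e2 : Complex.exp (a + θ * I - b) = Complex.exp (θ * I) * (Real.exp (a - b) : ℝ) := by
        rw [ofReal_exp, ← Complex.exp_add]; congr 1; push_cast; ring
      have e3 : Complex.exp (a + θ * I) = Complex.exp (θ * I) * (Real.exp a : ℝ) := by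
        rw [ofReal_exp, ← Complex.exp_add]; congr 1; ring
      rw [e1, e2, e3]
      have e4 : (Complex.exp (θ * I) * (Real.exp a : ℝ)) ^ 2 + Complex.exp (θ * I) ^ 2 * (x : ℂ) ^ 2 =
        Complex.exp (θ * I) ^ 2 * (((Real.exp a : ℝ) : ℂ) ^ 2 + (x : ℂ) ^ 2) := by ring
      rw [e4]
      have h0 := Complex.exp_ne_zero (θ * I)
      have : ∀ A B G D z : ℂ, z ≠ 0 → A * (B * G / D) = A * z * B * G / (z * D) := by
        intro A B G D z hz
        rw [show A * z * B * G = z * (A * (B * G)) by ring, mul_div_mul_left _ _ hz]; ring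
      exact this _ _ _ _ _ (pow_ne_zero 2 h0)
    · congr 1; ext a
      rw [hf]; simp
  · intro ξ hξ _
    have hle : ∀ r : ℝ, min (2 + s.re) (1 - s.re) ≤ r → -r * |ξ.re| ≤ -(min (2 + s.re) (1 - s.re)) * |ξ.re| := by
      intro r hr
      nlinarith [abs_nonneg ξ.re]
    rcases le_total 0 ξ.re with h | h
    · refine (hb2 ξ hξ).trans ?_
      refine mul_le_mul_of_nonneg_left (Real.exp_le_exp.2 ?_) hC0
      have := hle _ (min_le_right _ _)
      rw [abs_of_nonneg h] at this ⊢; exact this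
    · refine (hb1 ξ hξ).trans ?_
      refine mul_le_mul_of_nonneg_left (Real.exp_le_exp.2 ?_) hC0
      have := hle _ (min_le_left _ _)
      rw [abs_of_nonpos h] at this ⊢; linarith


/-- the regularised convolution, in the logarithmic variable. -/
noncomputable def pkB (z s : ℂ) (a : ℝ) : ℂ :=
  ∫ b : ℝ, Complex.exp (-s * b) * (pkg (z * Real.exp b) * pkg (z * Real.exp (a - b)))

noncomputable def pkF1 (s : ℂ) (x θ : ℝ) (a b : ℝ) : ℂ :=
  Complex.exp ((2 + s) * a) / ((Real.exp a : ℂ) ^ 2 + (x : ℂ) ^ 2) * (Complex.exp (-s * b) *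
    (pkg (Complex.exp (θ * I) * Real.exp b) * pkg (Complex.exp (θ * I) * Real.exp (a - b))))

lemma pkF1_integrable (s : ℂ) (hs1 : -1 < s.re) (hs2 : s.re < 1) (x : ℝ) (hx : 0 < x) (θ : ℝ)
    (hθ : |θ| ≤ π / 4) :
    Integrable (Function.uncurry (pkF1 s x θ)) ((volume : Measure ℝ).prod volume) := by
  have hpos : ∀ a : ℝ, 0 < Real.exp a ^ 2 + x ^ 2 := fun b => by positivity
  have hden : ∀ a : ℝ, (Real.exp a : ℂ) ^ 2 + (x : ℂ) ^ 2 = ((Real.exp a ^ 2 + x ^ 2 : ℝ) : ℂ) := by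
    intro a; push_cast; rfl
  have h1 := pk_weight_x x hx ((3 + s.re) / 2) (by linarith) (by linarith)
  have h2 := (pk_g_weighted θ hθ ((1 - s.re) / 2 : ℝ) (by simp only [ofReal_re]; linarith) (by simp only [ofReal_re]; linarith)).norm
  have h3 := (h1.mul_prod h2).const_mul 100
  refine h3.mono' ?_ (Filter.Eventually.of_forall ?_)
  · apply Continuous.aestronglyMeasurable
    unfold Function.uncurry pkF1
    have hc := pk_g_cont θ hθ
    have c1 : Continuous (fun p : ℝ × ℝ => pkg (Complex.exp (θ * I) * (Real.exp p.2 : ℝ))) := hc.comp continuous_snd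
    have c2 : Continuous (fun p : ℝ × ℝ => pkg (Complex.exp (θ * I) * (Real.exp (p.1 - p.2) : ℝ))) :=
      hc.comp (continuous_fst.sub continuous_snd)
    refine Continuous.mul (Continuous.div (by fun_prop) (by fun_prop) ?_) (Continuous.mul (by fun_prop) (c1.mul c2))
    intro p
    rw [hden]; exact_mod_cast (hpos p.1).ne'
  · rintro ⟨a, b⟩
    simp only [Function.uncurry, pkF1]
    rw [hden, norm_mul, norm_mul, norm_mul, norm_div, Complex.norm_real, Real.norm_of_nonneg (hpos a).le,
      norm_mul, pk_norm_exp_mul, pk_norm_exp_mul, pk_norm_exp_mul]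
    have := pk_g_interp θ (a - b) ((1 + s.re) / 2) hθ (by linarith) (by linarith)
    calc _ ≤ Real.exp ((2 + s).re * a) / (Real.exp a ^ 2 + x ^ 2) * (Real.exp ((-s).re * b) *
          (‖pkg (Complex.exp (θ * I) * (Real.exp b : ℝ))‖ * (100 * Real.exp (-((1 + s.re) / 2 * (a - b)))))) := by
          gcongr
      _ = 100 * (Real.exp ((2 + s).re * a) * Real.exp ((-s).re * b) * Real.exp (-((1 + s.re) / 2 * (a - b)))) / (Real.exp a ^ 2 + x ^ 2) *
          (‖pkg (Complex.exp (θ * I) * (Real.exp b : ℝ))‖) := by ring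
      _ = 100 * (Real.exp ((3 + s.re) / 2 * a) * Real.exp (((1 - s.re) / 2) * b)) / (Real.exp a ^ 2 + x ^ 2) *
          (‖pkg (Complex.exp (θ * I) * (Real.exp b : ℝ))‖) := by
          congr 3
          rw [← Real.exp_add, ← Real.exp_add, ← Real.exp_add]; congr 1; simp; ring
      _ = _ := by rw [ofReal_re]; ring

noncomputable def pkF2 (s : ℂ) (x θ : ℝ) (b c : ℝ) : ℂ :=
  Complex.exp (2 * b) * pkg (Complex.exp (θ * I) * Real.exp b) *
    (Complex.exp ((2 + s) * c) * pkg (Real.exp c)) /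
      ((Real.exp (b + c) : ℂ) ^ 2 + Complex.exp (θ * I) ^ 2 * (x : ℂ) ^ 2)

lemma pk_denom_real (θ x b : ℝ) (hθ : |θ| ≤ π / 4) :
    x ^ 2 ≤ ‖(Real.exp b : ℂ) ^ 2 + Complex.exp (θ * I) ^ 2 * (x : ℂ) ^ 2‖ ∧
      Real.exp b ^ 2 ≤ ‖(Real.exp b : ℂ) ^ 2 + Complex.exp (θ * I) ^ 2 * (x : ℂ) ^ 2‖ := by
  have := pk_denom (b : ℂ) θ x (by simpa using hθ)
  rw [← ofReal_exp, Complex.norm_real, Real.norm_of_nonneg (Real.exp_pos b).le] at this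
  exact this

lemma pkF2_integrable (s : ℂ) (hs1 : -1 < s.re) (hs2 : s.re < 1) (x : ℝ) (hx : 0 < x) (θ : ℝ)
    (hθ : |θ| ≤ π / 4) :
    Integrable (Function.uncurry (pkF2 s x θ)) ((volume : Measure ℝ).prod volume) := by
  have h1 := (pk_g_weighted θ hθ ((1 - s.re) / 2 : ℝ) (by simp only [ofReal_re]; linarith) (by simp only [ofReal_re]; linarith)).norm
  have h0 : |(0 : ℝ)| ≤ π / 4 := by simp; positivity
  have h2 := (pk_g_weighted 0 h0 ((1 + s.re) / 2 : ℝ) (by simp only [ofReal_re]; linarith) (by simp only [ofReal_re]; linarith)).norm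
  have h3 := (h1.mul_prod h2).const_mul (1 + 1 / x ^ 2)
  have hz : ∀ c : ℝ, pkg (Real.exp c : ℂ) = pkg (Complex.exp ((0 : ℝ) * I) * (Real.exp c : ℝ)) := by
    intro c; simp
  refine h3.mono' ?_ (Filter.Eventually.of_forall ?_)
  · apply Continuous.aestronglyMeasurable
    unfold Function.uncurry pkF2
    have c1 : Continuous (fun p : ℝ × ℝ => pkg (Complex.exp (θ * I) * (Real.exp p.1 : ℝ))) := (pk_g_cont θ hθ).comp continuous_fst
    have c2 : Continuous (fun p : ℝ × ℝ => pkg (Real.exp p.2 : ℝ)) := by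
      simp_rw [hz]
      exact (pk_g_cont 0 h0).comp continuous_snd
    refine Continuous.div (Continuous.mul (Continuous.mul (by fun_prop) c1) (Continuous.mul (by fun_prop) c2)) (by fun_prop) ?_
    intro p
    exact norm_pos_iff.1 (lt_of_lt_of_le (by positivity) (pk_denom_real θ x (p.1 + p.2) hθ).1)
  · rintro ⟨b, c⟩
    obtain ⟨d1, d2⟩ := pk_denom_real θ x (b + c) hθ
    simp only [Function.uncurry, pkF2]
    rw [norm_div, norm_mul, norm_mul, norm_mul, norm_mul, norm_mul, ← hz c]
    set D := ‖(Real.exp (b + c) : ℂ) ^ 2 + Complex.exp (θ * I) ^ 2 * (x : ℂ) ^ 2‖ with hD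
    have hDp : 0 < D := lt_of_lt_of_le (by positivity) d1
    simp only [pk_norm_exp_mul, ofReal_re]
    have hinv : 1 / D ≤ (1 + 1 / x ^ 2) * Real.exp (-((3 + s.re) / 2 * (b + c))) := by
      have e1 : Real.exp ((3 + s.re) / 2 * (b + c)) ≤ 1 + Real.exp (b + c) ^ 2 := by
        rw [← Real.exp_nat_mul]
        rcases le_total 0 (b + c) with h | h
        · have : Real.exp ((3 + s.re) / 2 * (b + c)) ≤ Real.exp ((2 : ℕ) * (b + c)) := by
            apply Real.exp_le_exp.2; push_cast; nlinarith
          linarith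
        · have : Real.exp ((3 + s.re) / 2 * (b + c)) ≤ 1 := Real.exp_le_one_iff.2 (by nlinarith)
          exact this.trans (le_add_of_nonneg_right (Real.exp_pos _).le)
      rw [Real.exp_neg, ← div_eq_mul_inv, div_le_div_iff₀ hDp (Real.exp_pos _), one_mul]
      have : 1 ≤ 1 / x ^ 2 * D := by
        rw [div_mul_eq_mul_div, one_mul, le_div_iff₀ (by positivity)]; linarith
      nlinarith
    have e3 : ∀ A B C E : ℝ, A * B * (C * E) / D = A * B * (C * E) * (1 / D) := fun _ _ _ _ => by ring
    rw [e3]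
    calc _ ≤ Real.exp ((2 : ℂ).re * b) * ‖pkg (Complex.exp (θ * I) * (Real.exp b : ℝ))‖ *
          (Real.exp ((2 + s).re * c) * ‖pkg (Real.exp c : ℝ)‖) * ((1 + 1 / x ^ 2) * Real.exp (-((3 + s.re) / 2 * (b + c)))) := by
          gcongr
      _ = (1 + 1 / x ^ 2) * (Real.exp ((2 : ℂ).re * b) * Real.exp ((2 + s).re * c) * Real.exp (-((3 + s.re) / 2 * (b + c)))) * (‖pkg (Complex.exp (θ * I) * (Real.exp b : ℝ))‖ *
          ‖pkg (Real.exp c : ℝ)‖) := by ring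
      _ = (1 + 1 / x ^ 2) * (Real.exp ((1 - s.re) / 2 * b) * Real.exp ((1 + s.re) / 2 * c)) * (‖pkg (Complex.exp (θ * I) * (Real.exp b : ℝ))‖ *
          ‖pkg (Real.exp c : ℝ)‖) := by
          congr 2
          rw [← Real.exp_add, ← Real.exp_add, ← Real.exp_add]; congr 1; simp; ring
      _ = _ := by ring

/-- Fubini assembly. -/
lemma pk_fubini (s : ℂ) (hs1 : -1 < s.re) (hs2 : s.re < 1) (x : ℝ) (hx : 0 < x) (θ : ℝ)
    (hθ : |θ| ≤ π / 4) :
    Integrable (fun a : ℝ => Complex.exp ((2 + s) * a) / ((Real.exp a : ℂ) ^ 2 + (x : ℂ) ^ 2) *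
      pkB (Complex.exp (θ * I)) s a) ∧
    Integrable (fun c : ℝ => Complex.exp (s * c) * pkg (Real.exp c) * pkQ (Complex.exp (θ * I)) (x / Real.exp c)) ∧
    Complex.exp (θ * I * s) * ∫ a : ℝ, Complex.exp ((2 + s) * a) / ((Real.exp a : ℂ) ^ 2 + (x : ℂ) ^ 2) *
      pkB (Complex.exp (θ * I)) s a =
    ∫ c : ℝ, Complex.exp (s * c) * pkg (Real.exp c) * pkQ (Complex.exp (θ * I)) (x / Real.exp c) := by
  have i1 := pkF1_integrable s hs1 hs2 x hx θ hθ
  have i2 := pkF2_integrable s hs1 hs2 x hx θ hθ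
  have a1 : ∀ a, ∫ b, pkF1 s x θ a b = Complex.exp ((2 + s) * a) / ((Real.exp a : ℂ) ^ 2 + (x : ℂ) ^ 2) *
      pkB (Complex.exp (θ * I)) s a := by
    intro a
    rw [pkB, ← integral_const_mul]; rfl
  have a2 : ∀ c, ∫ b, pkF2 s x θ b c = Complex.exp (s * c) * pkg (Real.exp c) * pkQ (Complex.exp (θ * I)) (x / Real.exp c) := by
    intro c
    rw [pkQ, ← integral_const_mul]
    congr 1; ext b
    unfold pkF2
    have d1 := pk_denom_real θ x (b + c) hθ
    have d2 := pk_denom_real θ (x / Real.exp c) b hθ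
    have n1 := norm_pos_iff.1 (lt_of_lt_of_le (by positivity) d1.1)
    have n2 := norm_pos_iff.1 (lt_of_lt_of_le (by positivity) d2.1)
    rw [mul_div_assoc', div_eq_div_iff n1 n2]
    have e1 : Complex.exp (2 * b) = (Real.exp b : ℂ) ^ 2 := by
      rw [ofReal_exp, ← Complex.exp_nat_mul]; norm_num
    have e2 : Complex.exp ((2 + s) * c) = (Real.exp c : ℂ) ^ 2 * Complex.exp (s * c) := by
      rw [ofReal_exp, ← Complex.exp_nat_mul, ← Complex.exp_add]; congr 1; push_cast; ring
    have hc : (Real.exp c : ℂ) ≠ 0 := by exact_mod_cast (Real.exp_pos c).ne'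
    rw [e1, e2, Real.exp_add]
    push_cast
    push_cast at hc
    field_simp
  have a3 : ∀ b, Complex.exp (θ * I * s) * ∫ a, pkF1 s x θ a b = ∫ c, pkF2 s x θ b c := by
    intro b
    have r := pk_rotate s hs1 hs2 x hx θ hθ b
    have r1 : ∫ a, pkF1 s x θ a b = (Complex.exp (-s * b) * pkg (Complex.exp (θ * I) * Real.exp b)) *
        ∫ a : ℝ, Complex.exp ((2 + s) * a) *
        pkg (Complex.exp (θ * I) * Real.exp (a - b)) / ((Real.exp a : ℂ) ^ 2 + (x : ℂ) ^ 2) := by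
      rw [← integral_const_mul]
      congr 1; ext a; unfold pkF1; ring
    rw [r1, mul_left_comm, r, ← integral_add_left_eq_self _ b, ← integral_const_mul]
    congr 1; ext c
    unfold pkF2
    have e1 : Complex.exp ((2 + s) * (b + c : ℝ)) = Complex.exp (s * b) * Complex.exp (2 * b) * Complex.exp ((2 + s) * c) := by
      rw [← Complex.exp_add, ← Complex.exp_add]; congr 1; push_cast; ring
    have e2 : Complex.exp (-s * b) * Complex.exp (s * b) = 1 := by
      rw [← Complex.exp_add, ← Complex.exp_zero]; congr 1; ring
    rw [e1, add_sub_cancel_left]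
    linear_combination (pkg (Complex.exp (θ * I) * Real.exp b) * Complex.exp (2 * b) * Complex.exp ((2 + s) * c) * pkg (Real.exp c) /
      ((Real.exp (b + c) : ℂ) ^ 2 + Complex.exp (θ * I) ^ 2 * (x : ℂ) ^ 2)) * e2
  refine ⟨?_, ?_, ?_⟩
  · have := i1.integral_prod_left
    simpa only [Function.uncurry, a1] using this
  · have := i2.integral_prod_right
    simpa only [Function.uncurry, a2] using this
  · simp_rw [← a1, ← a2]
    rw [integral_integral_swap i1, ← integral_const_mul, ← integral_integral_swap i2]
    simp_rw [a3]

/-- main analytic identity. -/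
lemma pk_main (s : ℂ) (hs1 : -1 < s.re) (hs2 : s.re < 1) (x : ℝ) (hx : 0 < x) :
    ∫ a : ℝ, Complex.exp ((2 + s) * a) / ((Real.exp a : ℂ) ^ 2 + (x : ℂ) ^ 2) *
      (I * (Complex.exp (π * I * s / 4) * pkB (Complex.exp (π * I / 4)) s a -
        Complex.exp (-π * I * s / 4) * pkB (Complex.exp (-π * I / 4)) s a)) =
    π * ((x : ℂ) ^ s * pkB 1 s (Real.log x)) := by
  have hpi := Real.pi_pos
  obtain ⟨p1, p2, p3⟩ := pk_fubini s hs1 hs2 x hx (1 * (π / 4)) (by rw [abs_of_nonneg] <;> linarith)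
  obtain ⟨q1, q2, q3⟩ := pk_fubini s hs1 hs2 x hx (-1 * (π / 4)) (by rw [abs_of_nonpos] <;> linarith)
  have t1 : (((1 * (π / 4) : ℝ) : ℂ) * I) = π * I / 4 := by push_cast; ring
  have t2 : (((-1 * (π / 4) : ℝ) : ℂ) * I) = -π * I / 4 := by push_cast; ring
  have hd := pk_dispersion
  simp only [t1, t2] at p1 p2 p3 q1 q2 q3 hd
  have u1 : (π : ℂ) * I * s / 4 = π * I / 4 * s := by ring
  have u2 : -(π : ℂ) * I * s / 4 = -π * I / 4 * s := by ring
  rw [u1, u2]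
  have : ∀ a : ℝ, Complex.exp ((2 + s) * a) / ((Real.exp a : ℂ) ^ 2 + (x : ℂ) ^ 2) *
      (I * (Complex.exp (π * I / 4 * s) * pkB (Complex.exp (π * I / 4)) s a -
        Complex.exp (-π * I / 4 * s) * pkB (Complex.exp (-π * I / 4)) s a)) =
      I * Complex.exp (π * I / 4 * s) * (Complex.exp ((2 + s) * a) / ((Real.exp a : ℂ) ^ 2 + (x : ℂ) ^ 2) *
        pkB (Complex.exp (π * I / 4)) s a) -
      I * Complex.exp (-π * I / 4 * s) * (Complex.exp ((2 + s) * a) / ((Real.exp a : ℂ) ^ 2 + (x : ℂ) ^ 2) *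
        pkB (Complex.exp (-π * I / 4)) s a) := fun a => by ring
  simp_rw [this]
  rw [integral_sub (p1.const_mul _) (q1.const_mul _), integral_const_mul, integral_const_mul,
    mul_assoc, mul_assoc, p3, q3, ← mul_sub, ← integral_sub p2 q2, ← integral_const_mul]
  have : ∀ c : ℝ, I * (Complex.exp (s * c) * pkg (Real.exp c) * pkQ (Complex.exp (π * I / 4)) (x / Real.exp c) -
      Complex.exp (s * c) * pkg (Real.exp c) * pkQ (Complex.exp (-π * I / 4)) (x / Real.exp c)) =
      π * (Complex.exp (s * c) * pkg (Real.exp c) * pkg ((x / Real.exp c : ℝ) : ℂ)) := by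
    intro c
    have := hd (x / Real.exp c) (by positivity)
    rw [← mul_sub, this]
    linear_combination (-π * (Complex.exp (s * c) * pkg (Real.exp c) * pkg ((x / Real.exp c : ℝ) : ℂ))) * I_mul_I
  simp_rw [this]
  rw [integral_const_mul, ← integral_sub_left_eq_self _ volume (Real.log x)]
  congr 1
  rw [pkB, ← integral_const_mul]
  congr 1; ext b
  have e1 : (x : ℂ) ^ s = Complex.exp (s * Real.log x) := by
    rw [← pk_cpow_exp, Real.exp_log hx]
  have e2 : Complex.exp (s * (Real.log x - b : ℝ)) = Complex.exp (s * Real.log x) * Complex.exp (-s * b) := by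
    rw [← Complex.exp_add]; congr 1; push_cast; ring
  have e3 : x / Real.exp (Real.log x - b) = Real.exp b := by
    rw [Real.exp_sub, Real.exp_log hx]; field_simp
  rw [e1, e2, e3, one_mul, one_mul]
  ring


lemma pkE_hasSum (u : ℂ) (hu : 0 < u.re) :
    HasSum (fun n : ℕ => Complex.exp (-(2 * π * ((n : ℂ) + 1) * u))) (pkE u) := by
  have hn : ‖Complex.exp (-(2 * π * u))‖ < 1 := by
    rw [Complex.norm_exp, Real.exp_lt_one_iff]
    simp; positivity
  have h := (hasSum_geometric_of_norm_lt_one hn).mul_left (Complex.exp (-(2 * π * u)))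
  have e1 : ∀ n : ℕ, Complex.exp (-(2 * π * u)) * Complex.exp (-(2 * π * u)) ^ n =
      Complex.exp (-(2 * π * ((n : ℂ) + 1) * u)) := by
    intro n
    rw [← Complex.exp_nat_mul, ← Complex.exp_add]; congr 1; ring
  have e2 : Complex.exp (-(2 * π * u)) * (1 - Complex.exp (-(2 * π * u)))⁻¹ = pkE u := by
    have h1 := pk_exp_sub_one_ne u hu
    have h0 := Complex.exp_ne_zero (2 * π * u)
    unfold pkE
    rw [Complex.exp_neg]
    have h2 : (1 : ℂ) - (Complex.exp (2 * π * u))⁻¹ ≠ 0 := by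
      intro h; apply h1
      field_simp at h; simpa using h
    field_simp
  simp_rw [e1, e2] at h
  exact h

noncomputable def pkZ (w : ℂ) : ℂ := ((2 * π : ℝ) : ℂ) ^ (-w) * Complex.Gamma w * riemannZeta w

lemma pk_mellinE (w : ℂ) (hw : 1 < w.re) : mellin (fun v : ℝ => pkE v) w = pkZ w := by
  have hpi := Real.pi_pos
  have h := hasSum_mellin (ι := ℕ) (a := fun _ => 1) (p := fun n => 2 * π * ((n : ℝ) + 1))
    (F := fun v : ℝ => pkE v) (s := w) (fun n => Or.inr (by positivity)) (by linarith) ?_ ?_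
  · rw [← h.tsum_eq, pkZ, zeta_eq_tsum_one_div_nat_add_one_cpow hw, ← tsum_mul_left]
    congr 1; ext n
    have : ((2 * π * ((n : ℝ) + 1) : ℝ) : ℂ) ^ w = ((2 * π : ℝ) : ℂ) ^ w * ((n : ℂ) + 1) ^ w := by
      rw [ofReal_mul, mul_cpow_ofReal_nonneg (by positivity) (by positivity)]
      push_cast; rfl
    rw [this, cpow_neg]
    simp only [mul_one, one_div, div_eq_mul_inv, mul_inv]
    ring
  · intro t ht
    have := pkE_hasSum t (by simpa using ht)
    convert this using 2 with n
    push_cast; rw [one_mul]; congr 1; ring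
  · have := (Real.summable_one_div_nat_add_rpow 1 w.re).2 hw
    refine (this.mul_left ((2 * π) ^ (-w.re))).congr ?_
    intro n
    rw [norm_one, abs_of_nonneg (by positivity), Real.rpow_neg (by positivity),
      Real.mul_rpow (show 0 ≤ 2 * π by positivity) (by positivity), one_div, one_div, mul_inv]

noncomputable def pkInd (v : ℝ) : ℂ := Set.indicator (Set.Ioc 0 1) (fun t : ℝ => (t : ℂ) ^ (-1 : ℂ)) v
noncomputable def pkP (v : ℝ) : ℂ := pkE v - (2 * π : ℂ)⁻¹ * pkInd v

lemma pk_contOn_E : ContinuousOn (fun v : ℝ => pkE v) (Set.Ioi 0) := fun v hv =>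
  (ContinuousAt.comp (f := fun v : ℝ => (v : ℂ)) (g := pkE) (pkE_differentiableAt (v : ℂ) (by simpa using hv)).continuousAt
    (by fun_prop)).continuousWithinAt

lemma pk_contOn_g : ContinuousOn (fun v : ℝ => pkg v) (Set.Ioi 0) := fun v hv =>
  (ContinuousAt.comp (f := fun v : ℝ => (v : ℂ)) (g := pkg) (pkg_differentiableAt (v : ℂ) (by simpa using hv)).continuousAt
    (by fun_prop)).continuousWithinAt

lemma pkE_bigO_top (k : ℕ) (hk : 0 < k) :
    (fun v : ℝ => pkE v) =O[Filter.atTop] (fun v : ℝ => v ^ (-(k : ℝ))) := by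
  refine Asymptotics.IsBigO.of_bound ((k.factorial : ℝ) / (2 * π) ^ k) ?_
  filter_upwards [Filter.eventually_gt_atTop 0] with v hv
  have := pkE_bound (v : ℂ) (by simpa using hv) k hk
  refine this.trans (le_of_eq ?_)
  rw [Real.norm_of_nonneg (by positivity), Real.rpow_neg hv.le, Real.rpow_natCast, ofReal_re, mul_pow]
  field_simp

lemma pk_zero_rpow_bigO (f : ℝ → ℂ) (h : ∀ v : ℝ, 0 < v → v ≤ 1 → ‖f v‖ ≤ 100) :
    f =O[nhdsWithin 0 (Set.Ioi 0)] (fun v : ℝ => v ^ (-(0 : ℝ))) := by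
  refine Asymptotics.IsBigO.of_bound 100 ?_
  filter_upwards [Ioc_mem_nhdsGT (show (0 : ℝ) < 1 by norm_num)] with v hv
  simpa using h v hv.1 hv.2

lemma pkg_bound_real (v : ℝ) (hv : 0 < v) : ‖pkg v‖ ≤ 100 ∧ ‖pkg v‖ ≤ 2 / v := by
  have h1 : 0 < (v : ℂ).re := by simpa using hv
  have h3 : ‖(v : ℂ)‖ = v := by rw [Complex.norm_real, Real.norm_of_nonneg hv.le]
  have h2 : ‖(v : ℂ)‖ ≤ 2 * (v : ℂ).re := by rw [h3]; simp; linarith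
  refine ⟨pkg_bound_one _ h1 h2, ?_⟩
  have := pkg_bound_inv _ h1 h2
  rwa [h3] at this

lemma pkP_small (v : ℝ) (hv : 0 < v) (hv1 : v ≤ 1) : pkP v = pkg v := by
  unfold pkP pkInd pkg
  rw [Set.indicator_of_mem (Set.mem_Ioc.2 ⟨hv, hv1⟩), cpow_neg_one, mul_inv (2 * π : ℂ)]

lemma pkP_locInt : LocallyIntegrableOn pkP (Set.Ioi 0) := by
  have h1 : LocallyIntegrableOn (fun v : ℝ => pkE v) (Set.Ioi 0) := pk_contOn_E.locallyIntegrableOn measurableSet_Ioi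
  have h2 : LocallyIntegrableOn (fun v : ℝ => (2 * π : ℂ)⁻¹ * pkInd v) (Set.Ioi 0) := by
    have h3 : LocallyIntegrableOn (fun t : ℝ => (t : ℂ) ^ (-1 : ℂ)) (Set.Ioi 0) := by
      refine ContinuousOn.locallyIntegrableOn ?_ measurableSet_Ioi
      intro t ht
      refine ContinuousAt.continuousWithinAt ?_
      exact Complex.continuousAt_ofReal_cpow_const _ _ (Or.inr (ne_of_gt ht))
    rw [locallyIntegrableOn_iff isOpen_Ioi.isLocallyClosed] at h3 ⊢
    intro k hk hk'
    exact ((h3 k hk hk').indicator measurableSet_Ioc).const_mul _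
  exact h1.sub h2

lemma pkP_top (k : ℕ) (hk : 0 < k) : pkP =O[Filter.atTop] (fun v : ℝ => v ^ (-(k : ℝ))) := by
  refine (pkE_bigO_top k hk).congr' ?_ Filter.EventuallyEq.rfl
  filter_upwards [Filter.eventually_gt_atTop 1] with v hv
  unfold pkP pkInd
  rw [Set.indicator_of_notMem (fun h => absurd h.2 (not_le.2 hv))]; simp

lemma pkP_bot : pkP =O[nhdsWithin 0 (Set.Ioi 0)] (fun v : ℝ => v ^ (-(0 : ℝ))) :=
  pk_zero_rpow_bigO _ (fun v h1 h2 => by rw [pkP_small v h1 h2]; exact (pkg_bound_real v h1).1)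

lemma pkP_diff (w : ℂ) (hw : 0 < w.re) : DifferentiableAt ℂ (mellin pkP) w := by
  obtain ⟨k, hk⟩ := exists_nat_gt w.re
  have hk0 : 0 < k := by
    have : (0 : ℝ) < k := hw.trans hk
    exact_mod_cast this
  exact mellin_differentiableAt_of_isBigO_rpow pkP_locInt (pkP_top k hk0) hk pkP_bot hw

lemma pkP_conv (w : ℂ) (hw : 0 < w.re) : MellinConvergent pkP w := by
  obtain ⟨k, hk⟩ := exists_nat_gt w.re
  have hk0 : 0 < k := by
    have : (0 : ℝ) < k := hw.trans hk
    exact_mod_cast this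
  exact mellinConvergent_of_isBigO_rpow pkP_locInt (pkP_top k hk0) hk pkP_bot hw

lemma pkP_mellin_right (w : ℂ) (hw : 1 < w.re) :
    mellin pkP w + (2 * π : ℂ)⁻¹ * (1 / (w - 1)) = pkZ w := by
  have h1 := hasMellin_cpow_Ioc (-1 : ℂ) (s := w) (by simp; linarith)
  have h2 := hasMellin_const_smul h1.1 ((2 * π : ℂ)⁻¹)
  have h3 := (hasMellin_add (pkP_conv w (by linarith)) h2.1).2
  rw [h2.2, h1.2] at h3
  rw [← pk_mellinE w hw]
  have e : (fun v : ℝ => pkE v) = fun t => pkP t + (2 * π : ℂ)⁻¹ • (Set.Ioc 0 1).indicator (fun t : ℝ => (t : ℂ) ^ (-1 : ℂ)) t := by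
    ext v; unfold pkP pkInd; simp
  rw [e, h3]; simp [sub_eq_add_neg]

lemma pk_formula (w : ℂ) (hw : 0 < w.re) (ε : ℝ) (hε : w.re - 1 < ε * w.im) (hε1 : ε ^ 2 = 1) :
    mellin pkP w + (2 * π : ℂ)⁻¹ * (1 / (w - 1)) = pkZ w := by
  set U : Set ℂ := {w : ℂ | 0 < w.re} ∩ {w : ℂ | w.re - 1 < ε * w.im} with hU
  have hUo : IsOpen U := by
    refine IsOpen.inter (isOpen_lt continuous_const continuous_re) (isOpen_lt (by fun_prop) (by fun_prop))
  have hUc : Convex ℝ U := by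
    refine Convex.inter (convex_halfSpace_re_gt 0) ?_
    intro a ha b hb p q hp hq hpq
    simp only [Set.mem_ofPred_eq] at ha hb ⊢
    simp
    rcases hp.eq_or_lt with rfl | hp'
    · have : q = 1 := by linarith
      subst this; simpa using hb
    · nlinarith
  have hne : ∀ w ∈ U, w ≠ 1 := by
    rintro _ h rfl
    simpa using h.2
  have d1 : DifferentiableOn ℂ (fun w => mellin pkP w + (2 * π : ℂ)⁻¹ * (1 / (w - 1))) U := by
    intro w h
    refine ((pkP_diff w h.1).add ?_).differentiableWithinAt
    have := sub_ne_zero.2 (hne w h)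
    fun_prop (disch := assumption)
  have d2 : DifferentiableOn ℂ pkZ U := by
    intro w h
    refine DifferentiableAt.differentiableWithinAt ?_
    unfold pkZ
    refine DifferentiableAt.mul (DifferentiableAt.mul ?_ ?_) (differentiableAt_riemannZeta (hne w h))
    · refine DifferentiableAt.const_cpow (by fun_prop) (Or.inl ?_)
      exact_mod_cast (by positivity)
    · refine Complex.differentiableAt_Gamma _ ?_
      intro m hm
      have := h.1
      rw [hm] at this
      simp at this
      have : (0 : ℝ) ≤ m := by positivity
      linarith
  have hz : (⟨2, 2 * ε⟩ : ℂ) ∈ U := by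
    refine ⟨by simp, ?_⟩
    simp; nlinarith
  refine (d1.analyticOnNhd hUo).eqOn_of_preconnected_of_eventuallyEq (d2.analyticOnNhd hUo) hUc.isPreconnected hz ?_ ⟨hw, hε⟩
  have : {w : ℂ | 1 < w.re} ∈ nhds (⟨2, 2 * ε⟩ : ℂ) :=
    (isOpen_lt continuous_const continuous_re).mem_nhds (by simp)
  filter_upwards [this] with w hw
  exact pkP_mellin_right w hw

lemma pk_mellin_g (w : ℂ) (h0 : 0 < w.re) (h1 : w.re < 1) : mellin (fun v : ℝ => pkg v) w = pkZ w := by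
  have hf : mellin pkP w + (2 * π : ℂ)⁻¹ * (1 / (w - 1)) = pkZ w := by
    rcases le_total 0 w.im with h | h
    · exact pk_formula w h0 1 (by linarith) (by norm_num)
    · exact pk_formula w h0 (-1) (by linarith) (by norm_num)
  have hw : (w - 2).re < -1 := by simp; linarith
  have i1 := integrableOn_Ioi_cpow_of_lt hw one_pos
  have i2 := integral_Ioi_cpow_of_lt hw one_pos
  have hP := pkP_conv w h0
  have e : ∀ v ∈ Set.Ioi (0 : ℝ), (v : ℂ) ^ (w - 1) • pkg v = (v : ℂ) ^ (w - 1) • pkP v -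
      (2 * π : ℂ)⁻¹ * (Set.Ioi 1).indicator (fun t : ℝ => (t : ℂ) ^ (w - 2)) v := by
    intro v hv
    rcases le_or_gt v 1 with h | h
    · rw [pkP_small v hv h, Set.indicator_of_notMem (show v ∉ Set.Ioi 1 by simpa using h)]; simp
    · unfold pkP pkInd
      have hv0 : (v : ℂ) ≠ 0 := by exact_mod_cast (ne_of_gt hv)
      rw [Set.indicator_of_notMem (fun h' => absurd h'.2 (not_le.2 h)), Set.indicator_of_mem (show v ∈ Set.Ioi 1 from h)]
      have ec : (v : ℂ) ^ (w - 2) = (v : ℂ) ^ (w - 1) / v := by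
        rw [show w - 2 = (w - 1) - 1 by ring, cpow_sub (w - 1) 1 hv0, cpow_one]
      rw [ec]
      generalize (v : ℂ) ^ (w - 1) = V
      unfold pkg
      simp only [smul_eq_mul, mul_inv]
      field_simp
      ring
  have hsub : Set.Ioi (1 : ℝ) ⊆ Set.Ioi 0 := Set.Ioi_subset_Ioi zero_le_one
  have i3 : IntegrableOn ((Set.Ioi 1).indicator (fun t : ℝ => (t : ℂ) ^ (w - 2))) (Set.Ioi 0) := by
    exact ((integrable_indicator_iff measurableSet_Ioi).2 i1).integrableOn
  rw [mellin, setIntegral_congr_fun measurableSet_Ioi e, integral_sub hP (i3.const_mul _), integral_const_mul,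
    setIntegral_indicator measurableSet_Ioi, Set.inter_eq_right.2 hsub, i2, ← hf, mellin]
  rw [show w - 2 + 1 = w - 1 by ring]
  simp; ring


lemma pkE_sector (u : ℂ) (hu : 0 < u.re) (h2 : ‖u‖ ≤ 2 * u.re) (k : ℕ) (hk : 0 < k) :
    ‖pkE u‖ ≤ k.factorial * (‖u‖ ^ k)⁻¹ := by
  have hn : 0 < ‖u‖ := norm_pos_iff.2 (pk_ne_zero_of_re hu)
  refine (pkE_bound u hu k hk).trans ?_
  rw [div_eq_mul_inv]
  gcongr
  nlinarith [Real.pi_gt_three]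

lemma pk_shift (f : ℂ → ℂ) (θ : ℝ) (hθ : |θ| ≤ π / 4) (C a c : ℝ) (ha : 0 < a) (hc : 0 < c) (hC0 : 0 ≤ C)
    (hd : ∀ ξ : ℂ, |ξ.im| ≤ π / 4 → DifferentiableAt ℂ f ξ)
    (hb1 : ∀ ξ : ℂ, |ξ.im| ≤ π / 4 → ‖f ξ‖ ≤ C * Real.exp (a * ξ.re))
    (hb2 : ∀ ξ : ℂ, |ξ.im| ≤ π / 4 → ‖f ξ‖ ≤ C * Real.exp (-c * ξ.re)) :
    ∫ x : ℝ, f (x + θ * I) = ∫ x : ℝ, f x := by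
  have hstrip : ∀ y : ℝ, y ∈ Set.uIcc 0 θ → |y| ≤ π / 4 := by
    intro y hy
    rw [abs_le] at hθ
    rw [abs_le]
    rcases le_total 0 θ with h | h
    · rw [Set.uIcc_of_le h] at hy
      refine ⟨?_, ?_⟩ <;> linarith [hy.1, hy.2]
    · rw [Set.uIcc_of_ge h] at hy
      refine ⟨?_, ?_⟩ <;> linarith [hy.1, hy.2]
  have hInt0 : ∀ y : ℝ, |y| ≤ π / 4 → Integrable (fun a : ℝ => f (a + y * I)) := by
    intro y hy
    have him : ∀ a : ℝ, |((a : ℂ) + y * I).im| ≤ π / 4 := fun a => by simpa using hy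
    refine pk_integrable_of_bounds (C := C) (a := a) (c := c) ?_ ha hc ?_ ?_
    · rw [continuous_iff_continuousAt]
      intro a
      exact ContinuousAt.comp (f := fun a : ℝ => (a : ℂ) + y * I) (hd _ (him a)).continuousAt (by fun_prop)
    · intro a; simpa using hb1 _ (him a)
    · intro a; simpa using hb2 _ (him a)
  have hB : Filter.Tendsto (fun R : ℝ => C * Real.exp (-(min a c) * R)) Filter.atTop (nhds 0) := by
    have hm : 0 < min a c := lt_min ha hc
    have h1 : Filter.Tendsto (fun R : ℝ => min a c * R) Filter.atTop Filter.atTop :=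
      Filter.tendsto_id.const_mul_atTop hm
    have := (Real.tendsto_exp_neg_atTop_nhds_zero.comp h1).const_mul C
    simpa [Function.comp_def] using this
  have key := pk_strip f 0 θ (fun ξ h => hd ξ (hstrip _ h)) _ hB 0 ?_ (hInt0 0 (hstrip _ Set.left_mem_uIcc))
    (hInt0 θ (hstrip _ Set.right_mem_uIcc))
  · rw [← key]; simp
  · intro ξ hξ _
    have hξ' := hstrip _ hξ
    have hle : ∀ r : ℝ, min a c ≤ r → -r * |ξ.re| ≤ -(min a c) * |ξ.re| := by
      intro r hr
      nlinarith [abs_nonneg ξ.re]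
    rcases le_total 0 ξ.re with h | h
    · refine (hb2 ξ hξ').trans ?_
      refine mul_le_mul_of_nonneg_left (Real.exp_le_exp.2 ?_) hC0
      have := hle _ (min_le_right _ _)
      rw [abs_of_nonneg h] at this ⊢; exact this
    · refine (hb1 ξ hξ').trans ?_
      refine mul_le_mul_of_nonneg_left (Real.exp_le_exp.2 ?_) hC0
      have := hle _ (min_le_left _ _)
      rw [abs_of_nonpos h] at this ⊢; linarith

/-- generic rotation of a Mellin transform. -/
lemma pk_mellin_rotate (G : ℂ → ℂ) (w : ℂ) (θ : ℝ) (hθ : |θ| ≤ π / 4) (C α β : ℝ) (hC : 0 ≤ C)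
    (hα : α < w.re) (hβ : w.re < β)
    (hd : ∀ u : ℂ, 0 < u.re → DifferentiableAt ℂ G u)
    (h1 : ∀ u : ℂ, 0 < u.re → ‖u‖ ≤ 2 * u.re → ‖G u‖ ≤ C * Real.exp (-α * Real.log ‖u‖))
    (h2 : ∀ u : ℂ, 0 < u.re → ‖u‖ ≤ 2 * u.re → ‖G u‖ ≤ C * Real.exp (-β * Real.log ‖u‖)) :
    ∫ b : ℝ, Complex.exp (w * b) * G (Complex.exp (θ * I) * Real.exp b) =
      Complex.exp (-(θ * I * w)) * mellin (fun v : ℝ => G v) w := by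
  have hnum : ∀ ξ : ℂ, |ξ.im| ≤ π / 4 →
      ‖Complex.exp (w * ξ)‖ ≤ Real.exp |w.im| * Real.exp (w.re * ξ.re) := by
    intro ξ hξ
    rw [Complex.norm_exp, ← Real.exp_add]
    apply Real.exp_le_exp.2
    simp
    have h2 : |ξ.im| ≤ 1 := hξ.trans (by linarith [Real.pi_le_four])
    have h3 : -(w.im * ξ.im) ≤ |w.im| := by
      refine (neg_le_abs _).trans ?_
      rw [abs_mul]
      exact mul_le_of_le_one_right (abs_nonneg _) h2
    linarith
  have hlog : ∀ ξ : ℂ, Real.log ‖Complex.exp ξ‖ = ξ.re := by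
    intro ξ; rw [Complex.norm_exp, Real.log_exp]
  have key := pk_shift (fun ξ => Complex.exp (w * ξ) * G (Complex.exp ξ)) θ hθ (Real.exp |w.im| * C) (w.re - α) (β - w.re)
    (by linarith) (by linarith) (by positivity) ?_ ?_ ?_
  · rw [pk_mellin_exp]
    have e : ∀ b : ℝ, Complex.exp (w * (b + θ * I)) * G (Complex.exp (b + θ * I)) =
        Complex.exp (θ * I * w) * (Complex.exp (w * b) * G (Complex.exp (θ * I) * Real.exp b)) := by
      intro b
      rw [← mul_assoc, ← Complex.exp_add, ofReal_exp, ← Complex.exp_add]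
      congr 2 <;> ring
    simp_rw [e] at key
    rw [integral_const_mul] at key
    simp_rw [← ofReal_exp] at key
    rw [← key, ← mul_assoc, ← Complex.exp_add]; simp
  · intro ξ hξ
    have hs := pk_sector ξ hξ
    exact DifferentiableAt.mul (by fun_prop) (DifferentiableAt.comp ξ (hd _ hs.1) (by fun_prop))
  · intro ξ hξ
    have hs := pk_sector ξ hξ
    have := h1 _ hs.1 hs.2
    rw [hlog] at this
    rw [norm_mul]
    calc _ ≤ Real.exp |w.im| * Real.exp (w.re * ξ.re) * (C * Real.exp (-α * ξ.re)) := by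
          gcongr; exact hnum ξ hξ
      _ = Real.exp |w.im| * C * (Real.exp (w.re * ξ.re) * Real.exp (-α * ξ.re)) := by ring
      _ = _ := by rw [← Real.exp_add]; congr 2; ring
  · intro ξ hξ
    have hs := pk_sector ξ hξ
    have := h2 _ hs.1 hs.2
    rw [hlog] at this
    rw [norm_mul]
    calc _ ≤ Real.exp |w.im| * Real.exp (w.re * ξ.re) * (C * Real.exp (-β * ξ.re)) := by
          gcongr; exact hnum ξ hξ
      _ = Real.exp |w.im| * C * (Real.exp (w.re * ξ.re) * Real.exp (-β * ξ.re)) := by ring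
      _ = _ := by rw [← Real.exp_add]; congr 2; ring

lemma pk_exp_log_pow (r : ℝ) (hr : 0 < r) (k : ℕ) : Real.exp (-(k : ℝ) * Real.log r) = (r ^ k)⁻¹ := by
  rw [neg_mul, Real.exp_neg, Real.exp_nat_mul, Real.exp_log hr]

lemma pk_Mg (w : ℂ) (θ : ℝ) (hθ : |θ| ≤ π / 4) (h0 : 0 < w.re) (h1 : w.re < 1) :
    ∫ b : ℝ, Complex.exp (w * b) * pkg (Complex.exp (θ * I) * Real.exp b) =
      Complex.exp (-(θ * I * w)) * pkZ w := by
  rw [← pk_mellin_g w h0 h1]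
  refine pk_mellin_rotate pkg w θ hθ 100 0 1 (by norm_num) h0 h1 pkg_differentiableAt ?_ ?_
  · intro u hu h2
    simpa using pkg_bound_one u hu h2
  · intro u hu h2
    have hn : 0 < ‖u‖ := norm_pos_iff.2 (pk_ne_zero_of_re hu)
    have e := pk_exp_log_pow ‖u‖ hn 1
    rw [Nat.cast_one, pow_one] at e
    rw [e, ← div_eq_mul_inv]
    refine (pkg_bound_inv u hu h2).trans ?_
    gcongr; norm_num

lemma pk_ME (w : ℂ) (θ : ℝ) (hθ : |θ| ≤ π / 4) (h0 : 1 < w.re) :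
    ∫ b : ℝ, Complex.exp (w * b) * pkE (Complex.exp (θ * I) * Real.exp b) =
      Complex.exp (-(θ * I * w)) * pkZ w := by
  rw [← pk_mellinE w h0]
  obtain ⟨k, hk⟩ := exists_nat_gt w.re
  have hk0 : 0 < k := by
    have : (0 : ℝ) < k := by linarith
    exact_mod_cast this
  refine pk_mellin_rotate pkE w θ hθ k.factorial ((1 : ℕ) : ℝ) k (by positivity) (by simpa using h0) hk pkE_differentiableAt ?_ ?_
  · intro u hu h2
    have hn : 0 < ‖u‖ := norm_pos_iff.2 (pk_ne_zero_of_re hu)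
    rw [pk_exp_log_pow ‖u‖ hn]
    refine (pkE_sector u hu h2 1 one_pos).trans ?_
    gcongr
    omega
  · intro u hu h2
    have hn : 0 < ‖u‖ := norm_pos_iff.2 (pk_ne_zero_of_re hu)
    rw [pk_exp_log_pow ‖u‖ hn]
    exact pkE_sector u hu h2 k hk0


lemma pk_laplace_diff (H : ℝ → ℂ) (hH : Continuous H) (C : ℝ) (h1 : ∀ b, ‖H b‖ ≤ C * Real.exp b)
    (h2 : ∀ b, ‖H b‖ ≤ C * Real.exp (-b)) (s : ℂ) (hs1 : -1 < s.re) (hs2 : s.re < 1) :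
    Integrable (fun b : ℝ => Complex.exp (-s * b) * H b) ∧
    DifferentiableAt ℂ (fun s => ∫ b : ℝ, Complex.exp (-s * b) * H b) s := by
  constructor
  · refine pk_integrable_of_bounds (C := C) (a := 1 - s.re) (c := 1 + s.re) (by fun_prop) (by linarith) (by linarith) ?_ ?_
    · intro b
      rw [norm_mul, pk_norm_exp_mul]
      calc _ ≤ Real.exp ((-s).re * b) * (C * Real.exp b) := by gcongr; exact h1 b
        _ = _ := by rw [mul_left_comm, ← Real.exp_add]; congr 2; simp; ring
    · intro b
      rw [norm_mul, pk_norm_exp_mul]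
      calc _ ≤ Real.exp ((-s).re * b) * (C * Real.exp (-b)) := by gcongr; exact h2 b
        _ = _ := by rw [mul_left_comm, ← Real.exp_add]; congr 2; simp; ring
  · have e : (fun s : ℂ => ∫ b : ℝ, Complex.exp (-s * b) * H b) = (fun s => mellin (fun v => H (Real.log v)) (-s)) := by
      ext s
      rw [pk_mellin_exp]; simp_rw [Real.log_exp]
    rw [e]
    refine DifferentiableAt.comp (𝕜 := ℂ) s (f := fun s : ℂ => -s) (g := mellin (fun v => H (Real.log v))) ?_ (by fun_prop)
    refine mellin_differentiableAt_of_isBigO_rpow (a := 1) (b := -1) ?_ ?_ ?_ ?_ ?_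
    · refine ContinuousOn.locallyIntegrableOn ?_ measurableSet_Ioi
      intro v hv
      exact (hH.continuousAt.comp (Real.continuousAt_log (ne_of_gt hv))).continuousWithinAt
    · refine Asymptotics.IsBigO.of_bound C ?_
      filter_upwards [Filter.eventually_gt_atTop 0] with v hv
      refine (h2 _).trans (le_of_eq ?_)
      rw [Real.exp_neg, Real.exp_log hv, Real.rpow_neg_one, Real.norm_of_nonneg (by positivity)]
    · simp; linarith
    · refine Asymptotics.IsBigO.of_bound C ?_
      filter_upwards [self_mem_nhdsWithin] with v hv
      have hv : 0 < v := hv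
      refine (h1 _).trans (le_of_eq ?_)
      rw [Real.exp_log hv, neg_neg, Real.rpow_one, Real.norm_of_nonneg (by positivity)]
    · simp; linarith

/-- unregularised convolution. -/
noncomputable def pkEE (z s : ℂ) (a : ℝ) : ℂ :=
  ∫ b : ℝ, Complex.exp (-s * b) * (pkE (z * Real.exp b) * pkE (z * Real.exp (a - b)))

lemma pkE_cont (θ : ℝ) (h : |θ| ≤ π / 4) :
    Continuous (fun b : ℝ => pkE (Complex.exp (θ * I) * (Real.exp b : ℂ))) := by
  rw [continuous_iff_continuousAt]
  intro b
  have := (pkE_differentiableAt _ (pk_sector_real θ b h).1).continuousAt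
  exact ContinuousAt.comp (f := fun b : ℝ => Complex.exp (θ * I) * (Real.exp b : ℂ)) this (by fun_prop)

lemma pkE_bounds (θ b : ℝ) (h : |θ| ≤ π / 4) :
    ‖pkE (Complex.exp (θ * I) * (Real.exp b : ℂ))‖ ≤ Real.exp (-b) ∧
    ‖pkE (Complex.exp (θ * I) * (Real.exp b : ℂ))‖ ≤ 2 * Real.exp (-b) ^ 2 := by
  obtain ⟨h1, h2, h3⟩ := pk_sector_real θ b h
  have k1 := pkE_sector _ h1 h2 1 one_pos
  have k2 := pkE_sector _ h1 h2 2 two_pos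
  rw [h3] at k1 k2
  simp only [Nat.factorial, pow_one] at k1 k2
  rw [Real.exp_neg, inv_pow]
  constructor
  · simpa using k1
  · simpa using k2

lemma pk_EE_laplace (θ a : ℝ) (h : |θ| ≤ π / 4) (s : ℂ) (hs1 : -1 < s.re) (hs2 : s.re < 1) :
    Integrable (fun b : ℝ => Complex.exp (-s * b) * (pkE (Complex.exp (θ * I) * Real.exp b) * pkE (Complex.exp (θ * I) * Real.exp (a - b)))) ∧
    DifferentiableAt ℂ (fun s => pkEE (Complex.exp (θ * I)) s a) s := by
  refine pk_laplace_diff (fun b : ℝ => pkE (Complex.exp (θ * I) * Real.exp b) * pkE (Complex.exp (θ * I) * Real.exp (a - b))) ?_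
    (2 * Real.exp (-a) + 2 * Real.exp (-a) ^ 2) ?_ ?_ s hs1 hs2
  · exact (pkE_cont θ h).mul ((pkE_cont θ h).comp (continuous_const.sub continuous_id))
  · intro b
    rw [norm_mul]
    calc _ ≤ Real.exp (-b) * (2 * Real.exp (-(a - b)) ^ 2) := by
          gcongr
          · exact (pkE_bounds θ b h).1
          · exact (pkE_bounds θ (a - b) h).2
      _ = 2 * Real.exp (-a) ^ 2 * Real.exp b := by
          rw [← Real.exp_nat_mul, ← Real.exp_nat_mul, mul_left_comm, mul_assoc, ← Real.exp_add, ← Real.exp_add]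
          congr 2; push_cast; ring
      _ ≤ _ := by gcongr; linarith [Real.exp_pos (-a)]
  · intro b
    rw [norm_mul]
    calc _ ≤ 2 * Real.exp (-b) ^ 2 * Real.exp (-(a - b)) := by
          gcongr
          · exact (pkE_bounds θ b h).2
          · exact (pkE_bounds θ (a - b) h).1
      _ = 2 * Real.exp (-a) * Real.exp (-b) := by
          rw [← Real.exp_nat_mul, mul_assoc, mul_assoc, ← Real.exp_add, ← Real.exp_add]
          congr 2; push_cast; ring
      _ ≤ _ := by gcongr; nlinarith [Real.exp_pos (-a)]

lemma pk_gg_laplace (θ a : ℝ) (h : |θ| ≤ π / 4) (s : ℂ) (hs1 : -1 < s.re) (hs2 : s.re < 1) :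
    Integrable (fun b : ℝ => Complex.exp (-s * b) * (pkg (Complex.exp (θ * I) * Real.exp b) * pkg (Complex.exp (θ * I) * Real.exp (a - b)))) ∧
    DifferentiableAt ℂ (fun s => pkB (Complex.exp (θ * I)) s a) s := by
  refine pk_laplace_diff (fun b : ℝ => pkg (Complex.exp (θ * I) * Real.exp b) * pkg (Complex.exp (θ * I) * Real.exp (a - b))) ?_
    (10000 + 10000 * Real.exp (-a)) ?_ ?_ s hs1 hs2
  · exact (pk_g_cont θ h).mul ((pk_g_cont θ h).comp (continuous_const.sub continuous_id))
  · intro b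
    rw [norm_mul]
    calc _ ≤ 100 * (100 * Real.exp (-(a - b))) := by
          gcongr
          · exact (pk_g_bounds θ b h).1
          · exact (pk_g_bounds θ (a - b) h).2
      _ = 10000 * Real.exp (-a) * Real.exp b := by
          rw [mul_assoc 10000, ← Real.exp_add, ← mul_assoc, show -(a - b) = -a + b by ring]
          norm_num
      _ ≤ _ := by gcongr; linarith
  · intro b
    rw [norm_mul]
    calc _ ≤ 100 * Real.exp (-b) * 100 := by
          gcongr
          · exact (pk_g_bounds θ b h).2
          · exact (pk_g_bounds θ (a - b) h).1
      _ = 10000 * Real.exp (-b) := by ring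
      _ ≤ _ := by gcongr; linarith [Real.exp_pos (-a)]

/-- right hand side of Lemma L. -/
noncomputable def pkR (θ a : ℝ) (s : ℂ) : ℂ :=
  pkB (Complex.exp (θ * I)) s a + (2 * π * Complex.exp (θ * I))⁻¹ *
    (Complex.exp (-a) * (Complex.exp (-(θ * I * (1 - s))) * pkZ (1 - s)) +
      Complex.exp (-(1 + s) * a) * (Complex.exp (-(θ * I * (1 + s))) * pkZ (1 + s)))

lemma pkL_left (θ a : ℝ) (h : |θ| ≤ π / 4) (s : ℂ) (hs1 : -1 < s.re) (hs2 : s.re < 0) :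
    pkEE (Complex.exp (θ * I)) s a = pkR θ a s := by
  set z := Complex.exp (θ * I) with hz
  have hz0 : z ≠ 0 := Complex.exp_ne_zero _
  have iE := (pk_EE_laplace θ a h s hs1 (by linarith)).1
  have iG := (pk_gg_laplace θ a h s hs1 (by linarith)).1
  rw [← hz] at iE iG
  have iM : Integrable (fun b : ℝ => Complex.exp (-(1 + s) * a) * (2 * π * z)⁻¹ * (Complex.exp ((1 + s) * (a - b : ℝ)) * pkg (z * Real.exp (a - b)))) :=
    ((pk_g_weighted θ h (1 + s) (by simp; linarith) (by simp; linarith)).comp_sub_left a).const_mul _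
  have e : ∀ b : ℝ, Complex.exp (-(a : ℂ)) * (2 * π * z)⁻¹ * (Complex.exp ((1 - s) * b) * pkE (z * Real.exp b)) =
      Complex.exp (-s * b) * (pkE (z * Real.exp b) * pkE (z * Real.exp (a - b))) -
      Complex.exp (-s * b) * (pkg (z * Real.exp b) * pkg (z * Real.exp (a - b))) -
      Complex.exp (-(1 + s) * a) * (2 * π * z)⁻¹ * (Complex.exp ((1 + s) * (a - b : ℝ)) * pkg (z * Real.exp (a - b))) := by
    intro b
    have hg : ∀ u, pkE u = pkg u + (2 * π * u)⁻¹ := fun u => by unfold pkg; ring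
    have e1 : Complex.exp (-(a : ℂ)) * Complex.exp ((1 - s) * b) = Complex.exp (-s * b) * Complex.exp (-(a - b : ℝ)) := by
      rw [← Complex.exp_add, ← Complex.exp_add]; congr 1; push_cast; ring
    have e2 : Complex.exp (-(1 + s) * a) * Complex.exp ((1 + s) * (a - b : ℝ)) = Complex.exp (-s * b) * Complex.exp (-b) := by
      rw [← Complex.exp_add, ← Complex.exp_add]; congr 1; push_cast; ring
    have e3 : ∀ b : ℝ, (2 * π * (z * (Real.exp b : ℝ)))⁻¹ = (2 * π * z)⁻¹ * Complex.exp (-b) := by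
      intro b
      rw [Complex.exp_neg, ← mul_inv, ofReal_exp]; congr 1; ring
    calc _ = (2 * π * z)⁻¹ * (Complex.exp (-(a : ℂ)) * Complex.exp ((1 - s) * b)) * pkE (z * Real.exp b) := by ring
      _ = Complex.exp (-s * b) * ((2 * π * z)⁻¹ * Complex.exp (-(a - b : ℝ))) * pkE (z * Real.exp b) := by rw [e1]; ring
      _ = _ := by
        have e4 : Complex.exp (-(1 + s) * a) * (2 * π * z)⁻¹ * (Complex.exp ((1 + s) * (a - b : ℝ)) * pkg (z * Real.exp (a - b))) =
          Complex.exp (-s * b) * ((2 * π * z)⁻¹ * Complex.exp (-b)) * pkg (z * Real.exp (a - b)) := by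
            linear_combination ((2 * π * z)⁻¹ * pkg (z * Real.exp (a - b))) * e2
        rw [e4, hg (z * Real.exp b), hg (z * Real.exp (a - b)), e3, e3]
        ring
  have k := pk_ME (1 - s) θ h (by simp; linarith)
  have k2 := pk_Mg (1 + s) θ h (by simp; linarith) (by simp; linarith)
  rw [← hz] at k k2
  have := congrArg (fun f : ℝ → ℂ => ∫ b, f b) (funext e)
  have iEG : Integrable (fun b : ℝ => Complex.exp (-s * b) * (pkE (z * Real.exp b) * pkE (z * Real.exp (a - b))) -
      Complex.exp (-s * b) * (pkg (z * Real.exp b) * pkg (z * Real.exp (a - b)))) := iE.sub iG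
  rw [integral_const_mul, k, integral_sub iEG iM, integral_sub iE iG, integral_const_mul,
    integral_sub_left_eq_self (fun b : ℝ => Complex.exp ((1 + s) * b) * pkg (z * Real.exp b)) volume a, k2] at this
  unfold pkR pkB pkEE
  rw [← hz]
  linear_combination -this

lemma pk_Z_diff (w : ℂ) (hw : 0 < w.re) (h1 : w ≠ 1) : DifferentiableAt ℂ pkZ w := by
  unfold pkZ
  refine DifferentiableAt.mul (DifferentiableAt.mul ?_ ?_) (differentiableAt_riemannZeta h1)
  · refine DifferentiableAt.const_cpow (by fun_prop) (Or.inl ?_)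
    exact_mod_cast (by positivity)
  · refine Complex.differentiableAt_Gamma _ ?_
    intro m hm
    rw [hm] at hw
    simp at hw
    have : (0 : ℝ) ≤ m := by positivity
    linarith

lemma pkL_ext (θ a : ℝ) (h : |θ| ≤ π / 4) (s : ℂ) (hs1 : -1 < s.re) (hs2 : s.re < 1) (ε : ℝ)
    (hε : 0 < s.re + ε * s.im) (hε1 : ε ^ 2 = 1) :
    pkEE (Complex.exp (θ * I)) s a = pkR θ a s := by
  set U : Set ℂ := ({s : ℂ | -1 < s.re} ∩ {s : ℂ | s.re < 1}) ∩ {s : ℂ | 0 < s.re + ε * s.im} with hU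
  have hUo : IsOpen U := by
    refine IsOpen.inter (IsOpen.inter (isOpen_lt continuous_const continuous_re) (isOpen_lt continuous_re continuous_const)) (isOpen_lt (by fun_prop) (by fun_prop))
  have hUc : Convex ℝ U := by
    refine Convex.inter (Convex.inter (convex_halfSpace_re_gt _) (convex_halfSpace_re_lt _)) ?_
    intro a ha b hb p q hp hq hpq
    simp only [Set.mem_ofPred_eq] at ha hb ⊢
    simp
    rcases hp.eq_or_lt with rfl | hp'
    · have : q = 1 := by linarith
      subst this; simpa using hb
    · nlinarith
  have hne : ∀ w ∈ U, w ≠ 0 := by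
    rintro _ h rfl
    simpa using h.2
  have d1 : DifferentiableOn ℂ (fun s => pkEE (Complex.exp (θ * I)) s a) U := fun s hs =>
    (pk_EE_laplace θ a h s hs.1.1 hs.1.2).2.differentiableWithinAt
  have d2 : DifferentiableOn ℂ (pkR θ a) U := by
    intro s hs
    have h1 : -1 < s.re := hs.1.1
    have h2 : s.re < 1 := hs.1.2
    have z1 : DifferentiableAt ℂ (fun s => pkZ (1 - s)) s :=
      DifferentiableAt.comp s (f := fun s : ℂ => 1 - s) (pk_Z_diff _ (by simp; linarith) (by simpa using hne s hs)) (by fun_prop)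
    have z2 : DifferentiableAt ℂ (fun s => pkZ (1 + s)) s :=
      DifferentiableAt.comp s (f := fun s : ℂ => 1 + s) (pk_Z_diff _ (by simp; linarith) (by simpa using hne s hs)) (by fun_prop)
    have z3 := (pk_gg_laplace θ a h s h1 h2).2
    refine DifferentiableAt.differentiableWithinAt ?_
    unfold pkR
    fun_prop
  have hz : (⟨-1 / 2, ε⟩ : ℂ) ∈ U := by
    refine ⟨⟨?_, ?_⟩, ?_⟩
    · simp; norm_num
    · simp; norm_num
    · simp; nlinarith
  refine (d1.analyticOnNhd hUo).eqOn_of_preconnected_of_eventuallyEq (d2.analyticOnNhd hUo) hUc.isPreconnected hz ?_ ⟨⟨hs1, hs2⟩, hε⟩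
  have : {w : ℂ | -1 < w.re} ∩ {w : ℂ | w.re < 0} ∈ nhds (⟨-1 / 2, ε⟩ : ℂ) :=
    ((isOpen_lt continuous_const continuous_re).inter (isOpen_lt continuous_re continuous_const)).mem_nhds (by constructor <;> simp <;> norm_num)
  filter_upwards [this] with w hw
  exact pkL_left θ a h w hw.1 hw.2

lemma pkL (θ a : ℝ) (h : |θ| ≤ π / 4) (s : ℂ) (hs0 : s ≠ 0) (hs1 : -1 < s.re) (hs2 : s.re < 1) :
    pkEE (Complex.exp (θ * I)) s a = pkR θ a s := by
  rcases lt_or_ge s.re 0 with hr | hr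
  · exact pkL_left θ a h s hs1 hr
  · have : 0 < s.re + |s.im| := by
      rcases hr.eq_or_lt with h0 | h0
      · have : s.im ≠ 0 := fun h1 => hs0 (Complex.ext h0.symm h1)
        have := abs_pos.2 this
        linarith
      · have := abs_nonneg s.im
        linarith
    rcases le_total 0 s.im with hi | hi
    · rw [abs_of_nonneg hi] at this
      exact pkL_ext θ a h s hs1 hs2 1 (by linarith) (by norm_num)
    · rw [abs_of_nonpos hi] at this
      exact pkL_ext θ a h s hs1 hs2 (-1) (by linarith) (by norm_num)


lemma pk_exp_neg_le (k : ℕ) (y : ℝ) (hy : 0 < y) : Real.exp (-y) ≤ k.factorial / y ^ k := by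
  have := Real.pow_div_factorial_le_exp y hy.le k
  have hf : (0:ℝ) < k.factorial := by positivity
  rw [Real.exp_neg, inv_eq_one_div, div_le_div_iff₀ (Real.exp_pos y) (by positivity)]
  rw [div_le_iff₀ hf] at this
  linarith

lemma pk_cosh_ge (c : ℝ) : Real.exp |c| / 2 ≤ Real.cosh c := by
  rw [← Real.cosh_abs, Real.cosh_eq]
  have := Real.exp_pos (-|c|)
  linarith

lemma pk_K_integrable (Z s : ℂ) (hZ : 0 < Z.re) (hs1 : -1 < s.re) (hs2 : s.re < 1) :
    Integrable (fun c : ℝ => Complex.exp (-s * c) * Complex.exp (-Z * (Real.cosh c : ℂ))) := by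
  have key : ∀ c : ℝ, ‖Complex.exp (-Z * (Real.cosh c : ℂ))‖ ≤ (2 / Z.re) * Real.exp (-|c|) := by
    intro c
    rw [Complex.norm_exp]
    have e : (-Z * (Real.cosh c : ℂ)).re = -(Z.re * Real.cosh c) := by
      rw [Complex.re_mul_ofReal]; simp
    rw [e]
    have h1 := pk_exp_neg_le 1 (Z.re * Real.cosh c) (mul_pos hZ (Real.cosh_pos c))
    refine h1.trans ?_
    have h2 := pk_cosh_ge c
    have h3 := Real.exp_pos |c|
    rw [Real.exp_neg, ← div_eq_mul_inv, div_div]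
    simp only [Nat.factorial_one, Nat.cast_one, pow_one]
    rw [div_le_div_iff₀ (mul_pos hZ (Real.cosh_pos c)) (by positivity)]
    nlinarith
  have hc : 0 ≤ 2 / Z.re := by positivity
  refine pk_integrable_of_bounds (C := 2 / Z.re) (a := 1 - s.re) (c := 1 + s.re) (by fun_prop) (by linarith) (by linarith) ?_ ?_
  · intro b
    rw [norm_mul, pk_norm_exp_mul]
    calc _ ≤ Real.exp ((-s).re * b) * ((2 / Z.re) * Real.exp (-|b|)) := by gcongr; exact key b
      _ ≤ Real.exp ((-s).re * b) * ((2 / Z.re) * Real.exp b) := by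
        gcongr; exact neg_le.mp (neg_le_abs b)
      _ = _ := by rw [mul_left_comm, ← Real.exp_add]; congr 2; simp; ring
  · intro b
    rw [norm_mul, pk_norm_exp_mul]
    calc _ ≤ Real.exp ((-s).re * b) * ((2 / Z.re) * Real.exp (-|b|)) := by gcongr; exact key b
      _ ≤ Real.exp ((-s).re * b) * ((2 / Z.re) * Real.exp (-b)) := by
        gcongr; exact le_abs_self b
      _ = _ := by rw [mul_left_comm, ← Real.exp_add]; congr 2; simp; ring

lemma pk_K_integral (Z s : ℂ) (hZ : 0 < Z.re) (hs1 : -1 < s.re) (hs2 : s.re < 1) :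
    ∫ c : ℝ, Complex.exp (-s * c) * Complex.exp (-Z * (Real.cosh c : ℂ)) = 2 * Kbes s Z := by
  set F : ℝ → ℂ := fun c => Complex.exp (-s * c) * Complex.exp (-Z * (Real.cosh c : ℂ)) with hF
  have hi : Integrable F := pk_K_integrable Z s hZ hs1 hs2
  have h1 : ∫ c, F c = (∫ c in Set.Iic 0, F c) + ∫ c in Set.Ioi 0, F c := by
    rw [← setIntegral_union (Set.Iic_disjoint_Ioi le_rfl) measurableSet_Ioi hi.integrableOn hi.integrableOn,
          Set.Iic_union_Ioi, Measure.restrict_univ]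
  have h2 : ∫ c in Set.Iic (0:ℝ), F c = ∫ c in Set.Ioi (0:ℝ), F (-c) := by
    rw [integral_comp_neg_Ioi, neg_zero]
  rw [h1, h2, ← integral_add hi.comp_neg.integrableOn hi.integrableOn, Kbes, ← integral_const_mul]
  refine integral_congr_ae (Filter.Eventually.of_forall fun c => ?_)
  simp only [hF, Real.cosh_neg, Complex.cosh]
  push_cast
  ring_nf

lemma pk_kernel (z s : ℂ) (hz : 0 < z.re) (hs1 : -1 < s.re) (hs2 : s.re < 1) (a p q : ℝ) (hp : 0 < p) (hq : 0 < q) :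
    ∫ b : ℝ, Complex.exp (-s * b) * (Complex.exp (-(2 * π * p * (z * Real.exp b))) *
      Complex.exp (-(2 * π * q * (z * Real.exp (a - b))))) =
    2 * Complex.exp (-(s * a / 2)) * ((q : ℂ) ^ (-s / 2) * (p : ℂ) ^ (s / 2)) *
      Kbes s (4 * π * z * (Real.sqrt (p * q * Real.exp a) : ℂ)) := by
  set β : ℝ := (a + Real.log q - Real.log p) / 2 with hβ
  set R : ℝ := Real.sqrt (p * q * Real.exp a) with hR
  have hR' : R = Real.exp ((a + Real.log q + Real.log p) / 2) := by
    rw [hR, Real.sqrt_eq_iff_eq_sq (by positivity) (Real.exp_pos _).le, ← Real.exp_nat_mul]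
    rw [show ((2:ℕ):ℝ) * ((a + Real.log q + Real.log p) / 2) = Real.log p + Real.log q + a by push_cast; ring,
      Real.exp_add, Real.exp_add, Real.exp_log hp, Real.exp_log hq]
  have hR0 : 0 < R := by rw [hR']; exact Real.exp_pos _
  have hp1 : ∀ c, p * Real.exp (c + β) = R * Real.exp c := by
    intro c
    rw [hR', ← Real.exp_log hp, ← Real.exp_add, ← Real.exp_add, Real.log_exp]
    congr 1; rw [hβ]; ring
  have hq1 : ∀ c, q * Real.exp (a - (c + β)) = R * Real.exp (-c) := by
    intro c
    rw [hR', ← Real.exp_log hq, ← Real.exp_add, ← Real.exp_add, Real.log_exp]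
    congr 1; rw [hβ]; ring
  rw [← integral_add_right_eq_self _ β]
  have hK := pk_K_integral (4 * π * z * (R : ℂ)) s (by
    rw [show 4 * (π:ℂ) * z * (R:ℂ) = ((4 * π * R : ℝ) : ℂ) * z by push_cast; ring, Complex.re_ofReal_mul]
    positivity) hs1 hs2
  have e1 : ∀ c : ℝ, Complex.exp (-s * ((c + β : ℝ):ℂ)) * (Complex.exp (-(2 * π * p * (z * Real.exp (c + β)))) *
      Complex.exp (-(2 * π * q * (z * Real.exp (a - (c + β)))))) =
      Complex.exp (-s * β) * (Complex.exp (-s * c) * Complex.exp (-(4 * π * z * (R:ℂ)) * (Real.cosh c : ℂ))) := by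
    intro c
    have h1 : (p:ℂ) * ((Real.exp (c + β) : ℝ) : ℂ) = R * ((Real.exp c : ℝ) : ℂ) := by exact_mod_cast hp1 c
    have h2 : (q:ℂ) * ((Real.exp (a - (c + β)) : ℝ) : ℂ) = R * ((Real.exp (-c) : ℝ) : ℂ) := by exact_mod_cast hq1 c
    rw [show 2 * (π:ℂ) * p * (z * Real.exp (c + β)) = 2 * π * z * (p * Real.exp (c + β)) by ring, h1,
      show 2 * (π:ℂ) * q * (z * Real.exp (a - (c + β))) = 2 * π * z * (q * Real.exp (a - (c + β))) by ring, h2,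
      Real.cosh_eq]
    rw [← Complex.exp_add, ← Complex.exp_add, ← Complex.exp_add, ← Complex.exp_add]
    congr 1
    push_cast
    ring
  simp_rw [e1]
  rw [integral_const_mul, hK]
  have e2 : Complex.exp (-s * β) = Complex.exp (-(s * a / 2)) * ((q : ℂ) ^ (-s / 2) * (p : ℂ) ^ (s / 2)) := by
    rw [Complex.cpow_def_of_ne_zero (by exact_mod_cast hq.ne'), Complex.cpow_def_of_ne_zero (by exact_mod_cast hp.ne'),
      ← Complex.ofReal_log hq.le, ← Complex.ofReal_log hp.le, ← Complex.exp_add, ← Complex.exp_add]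
    congr 1
    rw [hβ]; push_cast; ring
  rw [e2]; ring


lemma pk_E_norm (θ : ℝ) (h : |θ| ≤ π / 4) (p : ℝ) (hp : 0 < p) (b : ℝ) (k : ℕ) :
    ‖Complex.exp (-(2 * π * p * (Complex.exp (θ * I) * Real.exp b)))‖ ≤ k.factorial / (p * Real.exp b) ^ k := by
  have hb := pk_sector_real θ b h
  have h1 : Real.exp b ≤ 2 * (Complex.exp (θ * I) * (Real.exp b : ℂ)).re := by
    have := hb.2.1
    rwa [hb.2.2] at this
  refine le_trans ?_ (pk_exp_neg_le k (p * Real.exp b) (by positivity))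
  rw [Complex.norm_exp]
  gcongr
  rw [Complex.neg_re, show 2 * (π:ℂ) * p * (Complex.exp (θ * I) * Real.exp b) = ((2 * π * p : ℝ) : ℂ) * (Complex.exp (θ * I) * Real.exp b) by push_cast; ring,
    Complex.re_ofReal_mul]
  have hpi := Real.pi_gt_three
  nlinarith [mul_pos hp hb.1, Real.exp_pos b]

lemma pkE_hasSum_pnat (u : ℂ) (hu : 0 < u.re) :
    HasSum (fun n : ℕ+ => Complex.exp (-(2 * π * ((n : ℕ) : ℝ) * u))) (pkE u) := by
  rw [← Equiv.pnatEquivNat.symm.hasSum_iff]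
  convert pkE_hasSum u hu using 1
  ext n
  simp

lemma pk_ENorm_summable (u : ℂ) (hu : 0 < u.re) :
    Summable (fun n : ℕ+ => ‖Complex.exp (-(2 * π * ((n : ℕ) : ℝ) * u))‖) := by
  exact (pkE_hasSum_pnat u hu).summable.norm

lemma pk_hasSum_mul {f g : ℕ+ → ℂ} {u v : ℂ} (h1 : HasSum f u) (h2 : HasSum g v) :
    HasSum (fun x : ℕ+ × ℕ+ => f x.1 * g x.2) (u * v) :=
  h1.mul h2 (summable_mul_of_summable_norm (f := f) (g := g) h1.summable.norm h2.summable.norm)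

lemma pk_dbl (θ a : ℝ) (h : |θ| ≤ π / 4) (s : ℂ) (hs1 : -1 < s.re) (hs2 : s.re < 1) :
    HasSum (fun x : ℕ+ × ℕ+ => 2 * Complex.exp (-(s * a / 2)) *
      (((x.2 : ℕ) : ℂ) ^ (-s / 2) * ((x.1 : ℕ) : ℂ) ^ (s / 2)) *
      Kbes s (4 * π * Complex.exp (θ * I) * (Real.sqrt (((x.1 : ℕ) : ℝ) * ((x.2 : ℕ):ℝ) * Real.exp a) : ℂ)))
      (pkEE (Complex.exp (θ * I)) s a) := by
  have hz : 0 < (Complex.exp (θ * I)).re := by simpa using (pk_sector_real θ 0 h).1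
  have hk := fun x : ℕ+ × ℕ+ => pk_kernel (Complex.exp (θ * I)) s hz hs1 hs2 a ((x.1 : ℕ) : ℝ) ((x.2 : ℕ) : ℝ)
    (by exact_mod_cast x.1.pos) (by exact_mod_cast x.2.pos)
  simp only [Complex.ofReal_natCast] at hk
  simp_rw [← hk]
  unfold pkEE
  have hsum : Summable (fun x : ℕ+ × ℕ+ => (((x.1:ℕ):ℝ) ^ 2)⁻¹ * (((x.2:ℕ):ℝ) ^ 2)⁻¹) := by
    have h0 : Summable (fun n : ℕ+ => (((n:ℕ):ℝ) ^ 2)⁻¹) :=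
      (Real.summable_nat_pow_inv.mpr one_lt_two).comp_injective PNat.coe_injective
    exact h0.mul_of_nonneg h0 (fun n => by positivity) (fun n => by positivity)
  set C : ℝ := 12 * (Real.exp (-(2 * a)) + Real.exp (-(3 * a))) with hC
  refine hasSum_integral_of_dominated_convergence
    (fun x b => (((x.1:ℕ):ℝ) ^ 2)⁻¹ * (((x.2:ℕ):ℝ) ^ 2)⁻¹ * (C * (Real.exp ((-s).re * b) * Real.exp (-|b|)))) ?_ ?_ ?_ ?_ ?_
  · intro x
    exact Continuous.aestronglyMeasurable (by fun_prop)
  · rintro ⟨p, q⟩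
    refine Filter.Eventually.of_forall fun b => ?_
    have hp : (1:ℝ) ≤ ((p:ℕ):ℝ) := by exact_mod_cast PNat.pos _
    have hq : (1:ℝ) ≤ ((q:ℕ):ℝ) := by exact_mod_cast PNat.pos _
    have P := fun k => pk_E_norm θ h ((p:ℕ):ℝ) (by linarith) b k
    have Q := fun k => pk_E_norm θ h ((q:ℕ):ℝ) (by linarith) (a - b) k
    simp only [Complex.ofReal_natCast] at P Q
    simp only
    generalize ((p:ℕ):ℝ) = p' at *
    generalize ((q:ℕ):ℝ) = q' at *
    rw [norm_mul, pk_norm_exp_mul, norm_mul]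
    have hpi : (p' ^ 3)⁻¹ ≤ (p' ^ 2)⁻¹ := by
      gcongr; norm_num
    have hqi : (q' ^ 3)⁻¹ ≤ (q' ^ 2)⁻¹ := by
      gcongr; norm_num
    have key : ‖Complex.exp (-(2 * π * ((p:ℕ):ℂ) * (Complex.exp (θ * I) * Real.exp b)))‖ *
      ‖Complex.exp (-(2 * π * ((q:ℕ):ℂ) * (Complex.exp (θ * I) * Real.exp (a - b))))‖ ≤
      (p' ^ 2)⁻¹ * (q' ^ 2)⁻¹ * (C * Real.exp (-|b|)) := by
      rcases le_total 0 b with hb | hb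
      · calc _ ≤ (Nat.factorial 3 / (p' * Real.exp b) ^ 3) * (Nat.factorial 2 / (q' * Real.exp (a - b)) ^ 2) := by
              gcongr
              · exact P 3
              · exact Q 2
          _ = (p' ^ 3)⁻¹ * (q' ^ 2)⁻¹ * ((12 * Real.exp (-(2 * a))) * Real.exp (-b)) := by
              rw [mul_pow, mul_pow, ← Real.exp_nat_mul, ← Real.exp_nat_mul, mul_assoc 12, ← Real.exp_add,
                show -(2 * a) + -b = -(((3:ℕ):ℝ) * b + ((2:ℕ):ℝ) * (a - b)) by push_cast; ring, Real.exp_neg, Real.exp_add]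
              simp only [Nat.factorial]
              push_cast
              field_simp
              norm_num
          _ ≤ _ := by
              rw [abs_of_nonneg hb, hC]
              gcongr
              linarith [Real.exp_pos (-(3 * a))]
      · calc _ ≤ (Nat.factorial 2 / (p' * Real.exp b) ^ 2) * (Nat.factorial 3 / (q' * Real.exp (a - b)) ^ 3) := by
              gcongr
              · exact P 2
              · exact Q 3
          _ = (p' ^ 2)⁻¹ * (q' ^ 3)⁻¹ * ((12 * Real.exp (-(3 * a))) * Real.exp b) := by
              rw [mul_pow, mul_pow, ← Real.exp_nat_mul, ← Real.exp_nat_mul, mul_assoc 12, ← Real.exp_add,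
                show -(3 * a) + b = -(((2:ℕ):ℝ) * b + ((3:ℕ):ℝ) * (a - b)) by push_cast; ring, Real.exp_neg, Real.exp_add]
              simp only [Nat.factorial]
              push_cast
              field_simp
              norm_num
          _ ≤ _ := by
              rw [abs_of_nonpos hb, neg_neg, hC]
              gcongr
              linarith [Real.exp_pos (-(2 * a))]
    calc _ ≤ Real.exp ((-s).re * b) * ((p' ^ 2)⁻¹ * (q' ^ 2)⁻¹ * (C * Real.exp (-|b|))) := by gcongr
      _ = _ := by ring
  · exact Filter.Eventually.of_forall fun b => hsum.mul_right _
  · simp_rw [tsum_mul_right]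
    refine Integrable.const_mul (Integrable.const_mul ?_ _) _
    have : Integrable (fun b : ℝ => Complex.exp (-s * b) * ((Real.exp (-|b|) : ℝ) : ℂ)) := by
      refine pk_integrable_of_bounds (C := 1) (a := 1 - s.re) (c := 1 + s.re) (by fun_prop) (by linarith) (by linarith) ?_ ?_
      · intro b
        rw [norm_mul, pk_norm_exp_mul, Complex.norm_real, Real.norm_of_nonneg (Real.exp_pos _).le, ← Real.exp_add, one_mul, Real.exp_le_exp]
        have := neg_le_abs b
        simp only [Complex.neg_re]; linarith
      · intro b
        rw [norm_mul, pk_norm_exp_mul, Complex.norm_real, Real.norm_of_nonneg (Real.exp_pos _).le, ← Real.exp_add, one_mul, Real.exp_le_exp]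
        have := le_abs_self b
        simp only [Complex.neg_re]; linarith
    refine this.norm.congr (Filter.Eventually.of_forall fun b => ?_)
    simp only [norm_mul, pk_norm_exp_mul, Complex.norm_real, Real.norm_of_nonneg (Real.exp_pos _).le]
  · refine Filter.Eventually.of_forall fun b => ?_
    have h1 := pkE_hasSum_pnat _ (pk_sector_real θ b h).1
    have h2 := pkE_hasSum_pnat _ (pk_sector_real θ (a - b) h).1
    have h3 := pk_hasSum_mul h1 h2
    simp only [Complex.ofReal_natCast] at h3
    exact h3.mul_left (Complex.exp (-s * b))


lemma pk_sigma_fiber (s : ℂ) (n : ℕ) (hn : 0 < n) :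
    ∑ i ∈ n.divisorsAntidiagonal, ((i.2 : ℂ) ^ (-s / 2) * (i.1 : ℂ) ^ (s / 2)) =
      csigma (-s) n * (n : ℂ) ^ (s / 2) := by
  rw [Nat.sum_divisorsAntidiagonal' (fun p q : ℕ => ((q : ℂ) ^ (-s / 2) * (p : ℂ) ^ (s / 2))), csigma, Finset.sum_mul]
  refine Finset.sum_congr rfl fun d hd => ?_
  obtain ⟨k, rfl⟩ := Nat.dvd_of_mem_divisors hd
  have hd0 : 0 < d := Nat.pos_of_mul_pos_right hn
  rw [Nat.mul_div_cancel_left _ hd0]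
  push_cast
  rw [Complex.natCast_mul_natCast_cpow, ← mul_assoc, ← Complex.cpow_add _ _ (by exact_mod_cast hd0.ne')]
  congr 2
  ring

lemma pk_sum (θ a : ℝ) (h : |θ| ≤ π / 4) (s : ℂ) (hs1 : -1 < s.re) (hs2 : s.re < 1) :
    HasSum (fun n : ℕ => csigma (-s) (n + 1) * ((n : ℂ) + 1) ^ (s / 2) *
      Kbes s (4 * π * Complex.exp (θ * I) * (Real.sqrt (((n : ℝ) + 1) * Real.exp a) : ℂ)))
      (1 / 2 * Complex.exp (s * a / 2) * pkEE (Complex.exp (θ * I)) s a) := by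
  have h0 := pk_dbl θ a h s hs1 hs2
  rw [← sigmaAntidiagonalEquivProd.hasSum_iff] at h0
  have h1 := h0.sigma (g := fun n : ℕ+ => 2 * Complex.exp (-(s * a / 2)) *
      (csigma (-s) (n : ℕ) * ((n : ℕ) : ℂ) ^ (s / 2) *
      Kbes s (4 * π * Complex.exp (θ * I) * (Real.sqrt (((n : ℕ) : ℝ) * Real.exp a) : ℂ)))) (by
    intro n
    have hf := hasSum_fintype (fun c : Nat.divisorsAntidiagonal (n:ℕ) => 2 * Complex.exp (-(s * a / 2)) *
      (((c.1.2 : ℕ) : ℂ) ^ (-s / 2) * ((c.1.1 : ℕ) : ℂ) ^ (s / 2)) *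
      Kbes s (4 * π * Complex.exp (θ * I) * (Real.sqrt (((n : ℕ) : ℝ) * Real.exp a) : ℂ)))
    convert! hf using 1
    · ext c
      have hc := (Nat.mem_divisorsAntidiagonal.mp c.2).1
      simp only [Function.comp, sigmaAntidiagonalEquivProd, divisorsAntidiagonalFactors, PNat.mk_coe, Equiv.coe_fn_mk]
      rw [← Nat.cast_mul, hc]
    · rw [← pk_sigma_fiber s n n.pos, Finset.sum_coe_sort (Nat.divisorsAntidiagonal (n:ℕ)) (fun c : ℕ × ℕ => 2 * Complex.exp (-(s * a / 2)) *
      (((c.2 : ℕ) : ℂ) ^ (-s / 2) * ((c.1 : ℕ) : ℂ) ^ (s / 2)) *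
      Kbes s (4 * π * Complex.exp (θ * I) * (Real.sqrt (((n : ℕ) : ℝ) * Real.exp a) : ℂ))), Finset.sum_mul, Finset.mul_sum]
      refine Finset.sum_congr rfl fun c _ => by ring)
  have h2 := h1.mul_left (1 / 2 * Complex.exp (s * a / 2))
  rw [← Equiv.pnatEquivNat.symm.hasSum_iff] at h2
  refine h2.congr_fun ?_
  intro n
  simp only [Function.comp, Equiv.pnatEquivNat_symm_apply, Nat.succPNat_coe, Nat.succ_eq_add_one, Nat.cast_add, Nat.cast_one]
  have e : Complex.exp (s * a / 2) * Complex.exp (-(s * a / 2)) = 1 := by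
    rw [← Complex.exp_add]; simp
  linear_combination (-(csigma (-s) (n + 1) * ((n : ℂ) + 1) ^ (s / 2) *
      Kbes s (4 * π * Complex.exp (θ * I) * (Real.sqrt (((n : ℝ) + 1) * Real.exp a) : ℂ)))) * e


lemma pk_Phi (s : ℂ) (hs0 : s ≠ 0) (hs1 : -1 < s.re) (hs2 : s.re < 1) (x : ℝ) (hx : 0 < x) :
    PhiK x s = (x : ℂ) ^ (s / 2) * pkB 1 s (Real.log x) := by
  have h0 : |(0:ℝ)| ≤ π / 4 := by simp; positivity
  have hS := (pk_sum 0 (Real.log x) h0 s hs1 hs2).tsum_eq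
  rw [pkL 0 (Real.log x) h0 s hs0 hs1 hs2, Real.exp_log hx] at hS
  simp only [Complex.ofReal_zero, zero_mul, Complex.exp_zero, mul_one, pkR, neg_zero, one_mul] at hS
  have hx0 : (x:ℂ) ≠ 0 := by exact_mod_cast hx.ne'
  have hP : ((2 * π : ℝ) : ℂ) ≠ 0 := by exact_mod_cast (by positivity : (2 * π : ℝ) ≠ 0)
  have hlog : (Real.log x : ℂ) = Complex.log x := Complex.ofReal_log hx.le
  unfold PhiK
  have e1 : ∀ n : ℕ, ((4 * π * Real.sqrt (((n : ℝ) + 1) * x) : ℝ) : ℂ) = 4 * π * (Real.sqrt (((n : ℝ) + 1) * x) : ℂ) := by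
    intro n; push_cast; ring
  simp_rw [e1]
  rw [hS, hlog]
  have c1 : Complex.exp (s * Complex.log x / 2) = (x:ℂ) ^ (s / 2) := by
    rw [Complex.cpow_def_of_ne_zero hx0]; congr 1; ring
  have c2 : (x:ℂ) ^ (-1 - s / 2) = Complex.exp (-(1 + s) * Complex.log x) * (x:ℂ) ^ (s / 2) := by
    rw [Complex.cpow_def_of_ne_zero hx0, Complex.cpow_def_of_ne_zero hx0, ← Complex.exp_add]; congr 1; ring
  have c3 : (x:ℂ) ^ (-1 + s / 2) = Complex.exp (-Complex.log x) * (x:ℂ) ^ (s / 2) := by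
    rw [Complex.cpow_def_of_ne_zero hx0, Complex.cpow_def_of_ne_zero hx0, ← Complex.exp_add]; congr 1; ring
  have c4 : ((2 * π : ℝ) : ℂ) ^ (2 + s) = ((2 * π : ℝ) : ℂ) * ((2 * π : ℝ) : ℂ) ^ (1 + s) := by
    rw [show 2 + s = 1 + (1 + s) by ring, Complex.cpow_add _ _ hP, Complex.cpow_one]
  have c5 : ((2 * π : ℝ) : ℂ) ^ (2 - s) = ((2 * π : ℝ) : ℂ) * ((2 * π : ℝ) : ℂ) ^ (1 - s) := by
    rw [show 2 - s = 1 + (1 - s) by ring, Complex.cpow_add _ _ hP, Complex.cpow_one]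
  rw [c1, c2, c3, c4, c5, pkZ, pkZ, Complex.cpow_neg, Complex.cpow_neg]
  rw [show 2 * (π:ℂ) = ((2 * π : ℝ) : ℂ) by push_cast; ring]
  simp only [div_eq_mul_inv, mul_inv]
  ring

lemma pk_kappa (s : ℂ) (hs0 : s ≠ 0) (hs1 : -1 < s.re) (hs2 : s.re < 1) (a : ℝ) :
    kappaK (Real.exp a) s = Complex.exp (s * a / 2) * (I * (Complex.exp (π * I * s / 4) * pkB (Complex.exp (π * I / 4)) s a
      - Complex.exp (-π * I * s / 4) * pkB (Complex.exp (-π * I / 4)) s a)) := by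
  have hpi : 0 < π := Real.pi_pos
  have hp : |π / 4| ≤ π / 4 := by rw [abs_of_pos (by positivity)]
  have hm : |-(π / 4)| ≤ π / 4 := by rw [abs_neg]; exact hp
  have S1 := pk_sum (π / 4) a hp s hs1 hs2
  have S2 := pk_sum (-(π / 4)) a hm s hs1 hs2
  rw [pkL _ a hp s hs0 hs1 hs2] at S1
  rw [pkL _ a hm s hs0 hs1 hs2] at S2
  unfold pkR at S1 S2
  have t1 : ((π / 4 : ℝ) : ℂ) * I = π * I / 4 := by push_cast; ring
  have t2 : ((-(π / 4) : ℝ) : ℂ) * I = -π * I / 4 := by push_cast; ring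
  rw [t1] at S1
  rw [t2] at S2
  have S := ((S1.mul_left (Complex.exp (π * I * s / 4))).sub (S2.mul_left (Complex.exp (-π * I * s / 4)))).tsum_eq
  have hP : ((2 * π : ℝ) : ℂ) ≠ 0 := by exact_mod_cast (by positivity : (2 * π : ℝ) ≠ 0)
  have hpc : (π : ℂ) ≠ 0 := by exact_mod_cast hpi.ne'
  unfold kappaK etaK
  have e : (∑' n : ℕ, csigma (-s) (n + 1) * ((n : ℂ) + 1) ^ (s / 2) *
    (Complex.exp ((π : ℂ) * Complex.I * s / 4) *
        Kbes s (4 * (π : ℂ) * Complex.exp ((π : ℂ) * Complex.I / 4) *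
          (Real.sqrt (((n : ℝ) + 1) * Real.exp a) : ℂ))
      - Complex.exp (-(π : ℂ) * Complex.I * s / 4) *
        Kbes s (4 * (π : ℂ) * Complex.exp (-(π : ℂ) * Complex.I / 4) *
          (Real.sqrt (((n : ℝ) + 1) * Real.exp a) : ℂ)))) = _ := Eq.trans (tsum_congr fun n => by ring) S
  rw [e]
  have q0 : (2 * π * Real.sqrt (Real.exp a) : ℝ) = Real.exp (Real.log (2 * π) + a / 2) := by
    rw [Real.exp_add, Real.exp_log (by positivity), ← Real.exp_half]
  have q1 : ∀ w : ℂ, ((2 * π * Real.sqrt (Real.exp a) : ℝ) : ℂ) ^ w = ((2 * π : ℝ) : ℂ) ^ w * Complex.exp (w * a / 2) := by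
    intro w
    rw [q0, pk_cpow_exp, Complex.cpow_def_of_ne_zero hP, ← Complex.ofReal_log (by positivity), ← Complex.exp_add]
    congr 1; push_cast; ring
  rw [q1, q1]
  have q2 : ((2 * π : ℝ) : ℂ) ^ (-(1 - s)) = ((2 * π : ℝ) : ℂ)⁻¹ * ((2 * π : ℝ) : ℂ) ^ s := by
    rw [show -(1 - s) = -1 + s by ring, Complex.cpow_add _ _ hP, Complex.cpow_neg_one]
  have q3 : ((2 * π : ℝ) : ℂ) ^ (-(1 + s)) = ((2 * π : ℝ) : ℂ)⁻¹ * ((2 * π : ℝ) : ℂ) ^ (-s) := by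
    rw [show -(1 + s) = -1 + -s by ring, Complex.cpow_add _ _ hP, Complex.cpow_neg_one]
  rw [pkZ, pkZ, q2, q3]
  -- exponential identities
  have hE : ∀ u v w y : ℂ, Complex.exp u * ((Complex.exp v)⁻¹ * Complex.exp w) = Complex.exp (u - v + w) := by
    intro u v w y
    rw [← Complex.exp_neg, ← Complex.exp_add, ← Complex.exp_add]; congr 1; ring
  have i1 : I * (Complex.exp (π * I * s / 4) * ((Complex.exp (π * I / 4))⁻¹ * Complex.exp (-(π * I / 4 * (1 - s))))
      - Complex.exp (-π * I * s / 4) * ((Complex.exp (-π * I / 4))⁻¹ * Complex.exp (-(-π * I / 4 * (1 - s))))) = 2 * Complex.cos (π * s / 2) := by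
    rw [hE _ _ _ 0, hE _ _ _ 0]
    rw [show π * I * s / 4 - π * I / 4 + -(π * I / 4 * (1 - s)) = π * s / 2 * I + (-(π / 2) * I) by ring,
      show -π * I * s / 4 - -π * I / 4 + -(-π * I / 4 * (1 - s)) = -(π * s / 2) * I + (π / 2 * I) by ring,
      Complex.exp_add, Complex.exp_add, neg_mul, Complex.exp_neg (π / 2 * I), Complex.exp_pi_div_two_mul_I, Complex.cos, Complex.inv_I]
    ring_nf
    simp only [I_sq]
    ring_nf
  have i2 : I * (Complex.exp (π * I * s / 4) * ((Complex.exp (π * I / 4))⁻¹ * Complex.exp (-(π * I / 4 * (1 + s))))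
      - Complex.exp (-π * I * s / 4) * ((Complex.exp (-π * I / 4))⁻¹ * Complex.exp (-(-π * I / 4 * (1 + s))))) = 2 := by
    rw [hE _ _ _ 0, hE _ _ _ 0]
    rw [show π * I * s / 4 - π * I / 4 + -(π * I / 4 * (1 + s)) = (-(π / 2) * I) by ring,
      show -π * I * s / 4 - -π * I / 4 + -(-π * I / 4 * (1 + s)) = (π / 2 * I) by ring,
      neg_mul, Complex.exp_neg (π / 2 * I), Complex.exp_pi_div_two_mul_I, Complex.inv_I]
    ring_nf
    simp only [I_sq]
    ring_nf
  have i3 : Complex.exp (s * a / 2) * Complex.exp (-(1 + s) * a) = (Complex.exp a)⁻¹ * Complex.exp (-s * a / 2) := by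
    rw [← Complex.exp_neg, ← Complex.exp_add, ← Complex.exp_add]; congr 1; ring
  rw [Complex.ofReal_exp, Complex.exp_neg (a:ℂ)]
  rw [show (1 / (2 * (π:ℂ) ^ 2 * Complex.exp a)) = 2 * (((2 * π : ℝ) : ℂ)⁻¹ * ((2 * π : ℝ) : ℂ)⁻¹) * (Complex.exp a)⁻¹ by
    push_cast; field_simp]
  rw [show 2 * (π:ℂ) = ((2 * π : ℝ) : ℂ) by push_cast; ring]
  generalize ((2 * π : ℝ) : ℂ) ^ s = X1 at *
  generalize ((2 * π : ℝ) : ℂ) ^ (-s) = X2 at *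
  simp only [mul_inv]
  generalize ((2 * π : ℝ) : ℂ)⁻¹ = X3 at *
  linear_combination (Complex.exp (s * a / 2) * X3 * X3 * (Complex.exp a)⁻¹ * X1 * Complex.Gamma (1 - s) * riemannZeta (1 - s)) * i1
    + (Complex.exp (s * a / 2) * Complex.exp (-(1 + s) * a) * X3 * X3 * X2 * Complex.Gamma (1 + s) * riemannZeta (1 + s)) * i2
    + (2 * X3 * X3 * X2 * Complex.Gamma (1 + s) * riemannZeta (1 + s)) * i3

theorem PhiK_integral_representation
    (s : ℂ) (hs0 : s ≠ 0) (hs1 : -1 < s.re) (hs2 : s.re < 1) (x : ℝ) (hx : 0 < x) :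
    PhiK x s
    = ((x : ℂ) ^ (-s / 2) / (π : ℂ)) *
        ∫ t in Set.Ioi (0 : ℝ),
          (t : ℂ) ^ (1 + s / 2) * kappaK t s / ((t : ℂ) ^ 2 + (x : ℂ) ^ 2) := by
  have hx0 : (x:ℂ) ≠ 0 := by exact_mod_cast hx.ne'
  have hpc : (π : ℂ) ≠ 0 := by exact_mod_cast Real.pi_pos.ne'
  have hI : ∫ t in Set.Ioi (0 : ℝ), (t : ℂ) ^ (1 + s / 2) * kappaK t s / ((t : ℂ) ^ 2 + (x : ℂ) ^ 2) =
      π * ((x:ℂ) ^ s * pkB 1 s (Real.log x)) := by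
    rw [← pk_main s hs1 hs2 x hx, pk_integral_exp]
    refine integral_congr_ae (Filter.Eventually.of_forall fun a => ?_)
    simp only
    rw [pk_kappa s hs0 hs1 hs2, pk_cpow_exp]
    have e : Complex.exp ((2 + s) * a) = (Real.exp a : ℂ) * (Complex.exp ((1 + s / 2) * a) * Complex.exp (s * a / 2)) := by
      rw [Complex.ofReal_exp, ← Complex.exp_add, ← Complex.exp_add]; congr 1; ring
    rw [e]
    ring
  rw [hI, pk_Phi s hs0 hs1 hs2 x hx]
  have e : (x:ℂ) ^ (s / 2) = (x:ℂ) ^ (-s / 2) * (x:ℂ) ^ s := by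
    rw [← Complex.cpow_add _ _ hx0]; congr 1; ring
  rw [e]
  field_simp
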